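/- Let X_i, i ∈ I, be pairwise disjoint σ-scattered linear orders. If the sequence ⟨[X_i]_⇄ : i ∈ I⟩ of bi-embeddability classes is finite-to-one, i.e. there is no infinite J ⊆ I such that X_i ⇄ X_j for all i, j ∈ J, then the disjoint union ⋃_{i∈I} X_i is a reversible poset. -/

import Mathlib

universe u v w

section Defs

variable {α : Type*} {β : Type*}

/-- `f` is a homomorphism from `⟨α, r⟩` to `⟨β, s⟩`. -/
def IsHom (r : α → α → Prop) (s : β → β → Prop) (f : α → β) : Prop :=
  ∀ x y, r x y → s (f x) (f y)

/-- A condensation is a bijective homomorphism. -/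
def IsCond (r : α → α → Prop) (s : β → β → Prop) (f : α → β) : Prop :=
  Function.Bijective f ∧ IsHom r s f

/-- A monomorphism is an injective homomorphism. -/
def IsMono (r : α → α → Prop) (s : β → β → Prop) (f : α → β) : Prop :=
  Function.Injective f ∧ IsHom r s f

/-- An isomorphism of binary structures. -/
def IsIso (r : α → α → Prop) (s : β → β → Prop) (f : α → β) : Prop :=
  Function.Bijective f ∧ ∀ x y, r x y ↔ s (f x) (f y)

/-- A binary structure is reversible iff every self-condensation is an automorphism. -/
def Reversible (r : α → α → Prop) : Prop :=
  ∀ f : α → α, IsCond r r f → IsIso r r f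

/-- A binary structure is connected iff it has exactly one component: it is nonempty and
the least equivalence relation containing `r` relates any two points. -/
def Connected (r : α → α → Prop) : Prop :=
  Nonempty α ∧ ∀ x y, Relation.EqvGen r x y

/-- The relation of the disjoint union of the structures `⟨X i, R i⟩`. -/
def unionRel {I : Type*} {X : I → Type*} (R : ∀ i, X i → X i → Prop) :
    (Σ i, X i) → (Σ i, X i) → Prop :=
  fun a b => ∃ h : a.1 = b.1, R b.1 (h ▸ a.2) b.2

end Defs

/-- An embedding between binary structures (for linear orders regarded as structures
`⟨L, <⟩`, an injective map with `x < y ↔ f x < f y`). -/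
def EmbedsIn {α β : Type*} (r : α → α → Prop) (s : β → β → Prop) : Prop :=
  ∃ f : α → β, Function.Injective f ∧ ∀ x y, r x y ↔ s (f x) (f y)

/-- A linearly ordered set `⟨L, r⟩` is scattered iff the rationals do not embed into it. -/
def Scattered (L : Type*) (r : L → L → Prop) : Prop :=
  ¬ EmbedsIn ((· < ·) : ℚ → ℚ → Prop) r

/-- `⟨L, r⟩` is σ-scattered iff it is the union of at most countably many scattered
suborders. -/
def SigmaScattered (L : Type*) (r : L → L → Prop) : Prop :=
  ∃ S : ℕ → Set L, (⋃ n, S n) = Set.univ ∧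
    ∀ n, Scattered (S n) (fun a b => r a.1 b.1)

section WellQuasiOrder

open Set Filter Cardinal

/-- The set `X` without its least element. -/
def tl (X : Set ℕ) : Set ℕ := X \ {sInf X}

/-- `X` and `Y` have the same elements below `m`. -/
def Agree (m : ℕ) (X Y : Set ℕ) : Prop := ∀ i < m, i ∈ X ↔ i ∈ Y

/-- The finite set `t` is an initial segment of `X`. -/
def Init (t : Finset ℕ) (X : Set ℕ) : Prop :=
  ↑t ⊆ X ∧ ∀ x ∈ X, x ∉ t → ∀ i ∈ t, i < x

/-- `U` is open as a family of infinite subsets of `A`. -/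
def OpenOn (A : Set ℕ) (U : Set ℕ → Prop) : Prop :=
  ∀ X ⊆ A, X.Infinite → U X → ∃ m, ∀ Y ⊆ A, Y.Infinite → Agree m X Y → U Y

/-- `f` is locally constant on the space of infinite subsets of `A`. -/
def LocConst {Q : Type*} (A : Set ℕ) (f : Set ℕ → Q) : Prop :=
  ∀ X ⊆ A, X.Infinite → ∃ m, ∀ Y ⊆ A, Y.Infinite → Agree m X Y → f Y = f X

theorem tl_subset (X : Set ℕ) : tl X ⊆ X := sdiff_subset

theorem Set.Infinite.tl {X : Set ℕ} (h : X.Infinite) : (tl X).Infinite :=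
  h.sdiff (finite_singleton _)

theorem Agree.symm {m : ℕ} {X Y : Set ℕ} (h : Agree m X Y) : Agree m Y X :=
  fun i hi => (h i hi).symm

theorem Agree.trans {m : ℕ} {X Y Z : Set ℕ} (h : Agree m X Y) (h' : Agree m Y Z) :
    Agree m X Z :=
  fun i hi => (h i hi).trans (h' i hi)

theorem Agree.mono {m n : ℕ} {X Y : Set ℕ} (h : Agree n X Y) (hmn : m ≤ n) : Agree m X Y :=
  fun i hi => h i (hi.trans_le hmn)

theorem Agree.sInf_eq {m : ℕ} {X Y : Set ℕ} (h : Agree m X Y) (hX : X.Nonempty)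
    (hm : sInf X < m) : sInf Y = sInf X := by
  have hX' := Nat.sInf_mem hX
  have hY : sInf X ∈ Y := (h _ hm).1 hX'
  refine le_antisymm (Nat.sInf_le hY) ?_
  refine Nat.sInf_le ((h _ ((Nat.sInf_le hY).trans_lt hm)).2 (Nat.sInf_mem ⟨_, hY⟩))

theorem Agree.tl {m : ℕ} {X Y : Set ℕ} (h : Agree m X Y) (hX : X.Nonempty)
    (hm : sInf X < m) : Agree m (tl X) (tl Y) := by
  intro i hi
  simp only [_root_.tl, Set.mem_sdiff, h.sInf_eq hX hm, h i hi]

theorem agree_of_init {t : Finset ℕ} {m : ℕ} {X Y : Set ℕ} (hX : Init t X) (hY : Init t Y)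
    (hm : m ≤ t.card) : Agree m X Y := by
  have key : ∀ {X Y : Set ℕ}, Init t X → Init t Y → ∀ i < m, i ∈ X → i ∈ Y := by
    intro X Y hX hY i hi hiX
    by_cases hit : i ∈ t
    · exact hY.1 hit
    · have : t ⊆ Finset.range i := fun j hj => Finset.mem_range.2 (hX.2 i hiX hit j hj)
      have := Finset.card_le_card this
      rw [Finset.card_range] at this
      omega
  exact fun i hi => ⟨key hX hY i hi, key hY hX i hi⟩

theorem LocConst.mono {Q : Type*} {A B : Set ℕ} {f : Set ℕ → Q} (h : LocConst A f)
    (hBA : B ⊆ A) : LocConst B f := fun X hX hXi =>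
  let ⟨m, hm⟩ := h X (hX.trans hBA) hXi
  ⟨m, fun Y hY => hm Y (hY.trans hBA)⟩

theorem LocConst.comp_tl {Q : Type*} {A : Set ℕ} {f : Set ℕ → Q} (h : LocConst A f) :
    LocConst A (fun X => f (tl X)) := by
  intro X hX hXi
  obtain ⟨m, hm⟩ := h (tl X) ((tl_subset X).trans hX) hXi.tl
  refine ⟨max m (sInf X + 1), fun Y hY hYi hXY => ?_⟩
  exact hm _ ((tl_subset Y).trans hY) hYi.tl
    ((hXY.tl hXi.nonempty (by omega)).mono (le_max_left _ _))

theorem LocConst.prodMk {Q R : Type*} {A : Set ℕ} {f : Set ℕ → Q} {g : Set ℕ → R}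
    (hf : LocConst A f) (hg : LocConst A g) : LocConst A (fun X => (f X, g X)) := by
  intro X hX hXi
  obtain ⟨m, hm⟩ := hf X hX hXi
  obtain ⟨n, hn⟩ := hg X hX hXi
  refine ⟨max m n, fun Y hY hYi hXY => Prod.ext ?_ ?_⟩
  · exact hm Y hY hYi (hXY.mono (le_max_left _ _))
  · exact hn Y hY hYi (hXY.mono (le_max_right _ _))

theorem LocConst.comp {Q R : Type*} {A : Set ℕ} {f : Set ℕ → Q} (hf : LocConst A f)
    (g : Q → R) : LocConst A (fun X => g (f X)) := fun X hX hXi =>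
  let ⟨m, hm⟩ := hf X hX hXi
  ⟨m, fun Y hY hYi h => congrArg g (hm Y hY hYi h)⟩

theorem LocConst.openOn {A : Set ℕ} {U : Set ℕ → Prop} (hU : LocConst A U) : OpenOn A U :=
  fun X hX hXi hUX =>
  let ⟨m, hm⟩ := hU X hX hXi
  ⟨m, fun Y hY hYi h => (hm Y hY hYi h) ▸ hUX⟩

theorem exists_fusion {𝒰 : Ultrafilter ℕ} (h𝒰 : (𝒰 : Filter ℕ) ≤ cofinite) {A : Set ℕ}
    (hA : A ∈ 𝒰) {S : Finset ℕ → Set ℕ} (hS : ∀ t, S t ∈ 𝒰) :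
    ∃ B ⊆ A, B.Infinite ∧
      ∀ t : Finset ℕ, ↑t ⊆ B → ∀ n ∈ B, (∀ i ∈ t, i < n) → n ∈ S t := by
  let G : ℕ → Set ℕ := fun m => ⋂ t ∈ (Finset.range (m + 1)).powerset, S t
  have hG : ∀ m, G m ∈ 𝒰 := fun m => (biInter_finset_mem (f := (𝒰 : Filter ℕ)) _).2
    fun t _ => hS t
  have hI : ∀ m : ℕ, Ioi m ∈ 𝒰 := fun m => h𝒰 (by
    rw [mem_cofinite, compl_Ioi]; exact finite_Iic m)
  obtain ⟨f, hf, hr⟩ := exists_seq_of_forall_finset_exists (fun n => n ∈ A ∩ S ∅)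
    (fun m n => m < n ∧ n ∈ G m) (by
      intro s _
      have h1 : (⋂ m ∈ s, (Ioi m ∩ G m)) ∈ (𝒰 : Filter ℕ) :=
        (biInter_finset_mem s).2 fun m _ => inter_mem (hI m) (hG m)
      obtain ⟨y, hy1, hy2⟩ := 𝒰.neBot.nonempty_of_mem
        (inter_mem (inter_mem hA (hS ∅)) h1)
      exact ⟨y, hy1, fun x hx => mem_iInter₂.1 hy2 x hx⟩)
  have hmono : StrictMono f := fun a b hab => (hr a b hab).1
  refine ⟨range f, ?_, infinite_range_of_injective hmono.injective, ?_⟩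
  · rintro _ ⟨k, rfl⟩
    exact (hf k).1
  · rintro t ht _ ⟨k, rfl⟩ hlt
    rcases t.eq_empty_or_nonempty with rfl | hne
    · exact (hf k).2
    · obtain ⟨j, hj⟩ := ht (t.max'_mem hne)
      have hjk : j < k := hmono.lt_iff_lt.1 (hj ▸ hlt _ (t.max'_mem hne))
      refine mem_iInter₂.1 (hr j k hjk).2 t (Finset.mem_powerset.2 fun i hi => ?_)
      rw [Finset.mem_range, hj]
      exact Nat.lt_succ_of_le (t.le_max' i hi)

/-- `Wins 𝒰 A U o t` says that almost every extension of `t` is decided to lie in `U`, with a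
decision tree of rank at most `o`. -/
inductive Wins (𝒰 : Ultrafilter ℕ) (A : Set ℕ) (U : Set ℕ → Prop) :
    Ordinal.{0} → Finset ℕ → Prop
  | base (o : Ordinal.{0}) (t : Finset ℕ) :
      (∀ X ⊆ A, X.Infinite → Init t X → U X) → Wins 𝒰 A U o t
  | step (o : Ordinal.{0}) (t : Finset ℕ) (s : Set ℕ) (o' : ℕ → Ordinal.{0}) (hs : s ∈ 𝒰)
      (ho : ∀ n ∈ s, o' n < o) (hw : ∀ n ∈ s, Wins 𝒰 A U (o' n) (insert n t)) :
      Wins 𝒰 A U o t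

theorem Init.exists_next {t : Finset ℕ} {X : Set ℕ} (h : Init t X) (hX : X.Infinite) :
    ∃ n ∈ X, (∀ i ∈ t, i < n) ∧ Init (insert n t) X := by
  have hne : (X \ ↑t).Nonempty := (hX.sdiff t.finite_toSet).nonempty
  have hmem := Nat.sInf_mem hne
  refine ⟨_, hmem.1, h.2 _ hmem.1 hmem.2, ?_, ?_⟩
  · rw [Finset.coe_insert]
    exact insert_subset hmem.1 h.1
  · intro x hx hxt i hi
    rw [Finset.mem_insert, not_or] at hxt
    rcases Finset.mem_insert.1 hi with rfl | hi
    · exact lt_of_le_of_ne (Nat.sInf_le ⟨hx, hxt.2⟩) (Ne.symm hxt.1)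
    · exact h.2 x hx hxt.2 i hi

theorem exists_deciding (𝒰 : Ultrafilter ℕ) {A : Set ℕ} {U : Set ℕ → Prop}
    (hU : OpenOn A U) :
    ∃ S : Finset ℕ → Set ℕ, (∀ t, S t ∈ 𝒰) ∧ ∀ B ⊆ A, ∀ t : Finset ℕ, ↑t ⊆ B →
      (∀ t' : Finset ℕ, t ⊆ t' → ↑t' ⊆ B → ∀ n ∈ B, (∀ i ∈ t', i < n) → n ∈ S t') →
      (∀ X ⊆ B, X.Infinite → Init t X → U X) ∨ (∀ X ⊆ B, X.Infinite → Init t X → ¬ U X) := by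
  classical
  have hS : ∀ t : Finset ℕ, ∃ s ∈ 𝒰,
      (∀ o, Wins 𝒰 A U o t → (∀ X ⊆ A, X.Infinite → Init t X → U X) ∨
        ∀ n ∈ s, ∃ o' < o, Wins 𝒰 A U o' (insert n t)) ∧
      ((¬ ∃ o, Wins 𝒰 A U o t) → ∀ n ∈ s, ¬ ∃ o, Wins 𝒰 A U o (insert n t)) := by
    intro t
    by_cases hW : ∃ o, Wins 𝒰 A U o t
    · have hmin := csInf_mem (s := {o | Wins 𝒰 A U o t}) hW
      set o₀ := sInf {o | Wins 𝒰 A U o t} with ho₀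
      have hle : ∀ o, Wins 𝒰 A U o t → o₀ ≤ o := fun o ho => csInf_le' ho
      cases hmin with
      | base _ _ h =>
        exact ⟨univ, univ_mem, fun o _ => Or.inl h, fun h => absurd hW h⟩
      | step _ _ s o' hs ho hw =>
        exact ⟨s, hs, fun o h => Or.inr fun n hn =>
          ⟨o' n, (ho n hn).trans_le (hle o h), hw n hn⟩, fun h => absurd hW h⟩
    · refine ⟨{n | ¬ ∃ o, Wins 𝒰 A U o (insert n t)}, ?_, fun o ho => absurd ⟨o, ho⟩ hW,
        fun _ n hn => hn⟩
      by_contra hcon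
      have hs := Ultrafilter.compl_mem_iff_notMem.2 hcon
      have : ∀ n ∈ {n | ¬ ∃ o, Wins 𝒰 A U o (insert n t)}ᶜ, ∃ o, Wins 𝒰 A U o (insert n t) := by
        intro n hn
        simpa using hn
      choose! o' ho' using this
      refine hW ⟨_, Wins.step (⨆ n, Order.succ (o' n)) t _ o' hs (fun n _ => ?_) ho'⟩
      exact (Order.lt_succ (o' n)).trans_le (Ordinal.le_iSup (fun n => Order.succ (o' n)) n)
  choose S hS𝒰 hS1 hS2 using hS
  refine ⟨S, hS𝒰, fun B hBA t htB hfol => ?_⟩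
  by_cases hW : ∃ o, Wins 𝒰 A U o t
  · left
    obtain ⟨o, ho⟩ := hW
    intro X hXB hXi hX
    induction o using WellFoundedLT.induction generalizing t with
    | ind o ih =>
      rcases hS1 t o ho with h | h
      · exact h X (hXB.trans hBA) hXi hX
      · obtain ⟨n, hnX, hn, hn'⟩ := hX.exists_next hXi
        obtain ⟨o', ho', hw⟩ := h n (hfol t subset_rfl htB n (hXB hnX) hn)
        refine ih o' ho' _ (hn'.1.trans hXB) (fun t' ht' => hfol t' ?_) hw hn'
        exact (Finset.subset_insert _ _).trans ht'
  · right
    intro X hXB hXi hX hUX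
    have key : ∀ k : ℕ, ∃ t' : Finset ℕ, t ⊆ t' ∧ Init t' X ∧ k ≤ t'.card ∧
        ¬ ∃ o, Wins 𝒰 A U o t' := by
      intro k
      induction k with
      | zero => exact ⟨t, subset_rfl, hX, Nat.zero_le _, hW⟩
      | succ k ih =>
        obtain ⟨t', htt', hin, hk, hw⟩ := ih
        obtain ⟨n, hnX, hn, hn'⟩ := hin.exists_next hXi
        refine ⟨insert n t', htt'.trans (Finset.subset_insert _ _), hn', ?_,
          hS2 t' hw n (hfol t' htt' (hin.1.trans hXB) n (hXB hnX) hn)⟩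
        rw [Finset.card_insert_of_notMem fun h => lt_irrefl _ (hn n h)]
        omega
    obtain ⟨m, hm⟩ := hU X (hXB.trans hBA) hXi hUX
    obtain ⟨t', -, hin, hk, hw⟩ := key m
    exact hw ⟨0, Wins.base _ _ fun Y hY hYi hYt => hm Y hY hYi (agree_of_init hin hYt hk)⟩

theorem exists_ultrafilter_mem {A : Set ℕ} (hA : A.Infinite) :
    ∃ 𝒰 : Ultrafilter ℕ, (𝒰 : Filter ℕ) ≤ cofinite ∧ A ∈ 𝒰 := by
  have := cofinite_inf_principal_neBot_iff.2 hA
  refine ⟨Ultrafilter.of (cofinite ⊓ 𝓟 A), (Ultrafilter.of_le _).trans inf_le_left, ?_⟩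
  exact (Ultrafilter.of_le _).trans inf_le_right (mem_principal_self A)

/-- Open families of infinite sets are Ramsey. -/
theorem OpenOn.exists_homogeneous {A : Set ℕ} (hA : A.Infinite) {U : Set ℕ → Prop}
    (hU : OpenOn A U) :
    ∃ B ⊆ A, B.Infinite ∧
      ((∀ X ⊆ B, X.Infinite → U X) ∨ (∀ X ⊆ B, X.Infinite → ¬ U X)) := by
  obtain ⟨𝒰, h𝒰, hA𝒰⟩ := exists_ultrafilter_mem hA
  obtain ⟨S, hS, hdec⟩ := exists_deciding 𝒰 hU
  obtain ⟨B, hBA, hB, hfol⟩ := exists_fusion h𝒰 hA𝒰 hS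
  have h0 : ∀ X, Init ∅ X := fun X => ⟨by simp, by simp⟩
  refine ⟨B, hBA, hB, ?_⟩
  refine (hdec B hBA ∅ (by simp) fun t' _ h => hfol t' h).imp ?_ ?_ <;>
    exact fun h X hX hXi => h X hX hXi (h0 X)

/-- Countably many open families become clopen on a suitable infinite set. -/
theorem exists_forall_openOn_not {A : Set ℕ} (hA : A.Infinite) {U : ℕ → Set ℕ → Prop}
    (hU : ∀ k, OpenOn A (U k)) :
    ∃ B ⊆ A, B.Infinite ∧ ∀ k, OpenOn B (fun X => ¬ U k X) := by
  classical
  obtain ⟨𝒰, h𝒰, hA𝒰⟩ := exists_ultrafilter_mem hA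
  choose S hS hdec using fun k => exists_deciding 𝒰 (hU k)
  let S' : Finset ℕ → Set ℕ := fun t => ⋂ k ∈ Finset.range (t.card + 1), S k t
  obtain ⟨B, hBA, hB, hfol⟩ := exists_fusion h𝒰 hA𝒰 (S := S') fun t =>
    (biInter_finset_mem (f := (𝒰 : Filter ℕ)) _).2 fun k _ => hS k t
  refine ⟨B, hBA, hB, fun k X hXB hXi hX => ?_⟩
  have key : ∀ k : ℕ, ∃ t : Finset ℕ, Init t X ∧ k ≤ t.card := by
    intro k
    induction k with
    | zero => exact ⟨∅, ⟨by simp, by simp⟩, Nat.zero_le _⟩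
    | succ k ih =>
      obtain ⟨t, ht, hk⟩ := ih
      obtain ⟨n, hnX, hn, hn'⟩ := ht.exists_next hXi
      refine ⟨insert n t, hn', ?_⟩
      rw [Finset.card_insert_of_notMem fun h => lt_irrefl _ (hn n h)]
      omega
  obtain ⟨t, ht, hk⟩ := key k
  have hdec' := hdec k B hBA t (ht.1.trans hXB) fun t' htt' ht'B n hn hlt => by
    refine mem_iInter₂.1 (hfol t' ht'B n hn hlt) k (Finset.mem_range.2 ?_)
    have := Finset.card_le_card htt'
    omega
  have hno : ∀ Y ⊆ B, Y.Infinite → Init t Y → ¬ U k Y := by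
    rcases hdec' with h | h
    · exact absurd (h X hXB hXi ht) hX
    · exact h
  refine ⟨t.sup id + 1, fun Y hYB hYi hXY => hno Y hYB hYi ⟨fun i hi => ?_, ?_⟩⟩
  · exact (hXY i (Nat.lt_succ_of_le (Finset.le_sup (f := id) hi))).1 (ht.1 hi)
  · intro x hx hxt i hi
    by_contra! hle
    have hxX : x ∈ X := (hXY x (Nat.lt_succ_of_le (hle.trans (Finset.le_sup (f := id) hi)))).2 hx
    exact absurd (ht.2 x hxX hxt i hi) (by omega)

/-- `f` is a bad array on `A` for the relation `le`. -/
def IsBad {Q : Type*} (le : Q → Q → Prop) (A : Set ℕ) (f : Set ℕ → Q) : Prop :=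
  A.Infinite ∧ LocConst A f ∧ ∀ X ⊆ A, X.Infinite → ¬ le (f X) (f (tl X))

/-- `g` on `B` refines `f` on `A`, strictly lowering the rank where it differs. -/
def Refines {Q : Type*} (le : Q → Q → Prop) (ρ : Q → Ordinal.{w}) (B : Set ℕ) (g : Set ℕ → Q)
    (A : Set ℕ) (f : Set ℕ → Q) : Prop :=
  B ⊆ A ∧ ∀ X ⊆ B, X.Infinite → g X = f X ∨ (ρ (g X) < ρ (f X) ∧ le (g X) (f X))

/-- A bad array refining `f` without changing the underlying set below `m`. -/
def Competes {Q : Type*} (le : Q → Q → Prop) (ρ : Q → Ordinal.{w}) (m : ℕ)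
    (p q : Set ℕ × (Set ℕ → Q)) : Prop :=
  IsBad le p.1 p.2 ∧ Refines le ρ p.1 p.2 q.1 q.2 ∧ Agree m p.1 q.1

/-- Strict supremum of the ranks of the values of `f` on the sets agreeing with `r` below `m`. -/
noncomputable def localRank {Q : Type*} (ρ : Q → Ordinal.{w}) (m : ℕ)
    (p : Set ℕ × (Set ℕ → Q)) (r : Set ℕ) : Ordinal.{w} :=
  sInf {o | ∀ X ⊆ p.1, X.Infinite → Agree m X r → ρ (p.2 X) < o}

section BadArray

variable {Q : Type*} {le : Q → Q → Prop} {ρ : Q → Ordinal.{w}}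

theorem localRank_le {m : ℕ} {p : Set ℕ × (Set ℕ → Q)} {r : Set ℕ} {o : Ordinal.{w}}
    (h : ∀ X ⊆ p.1, X.Infinite → Agree m X r → ρ (p.2 X) < o) : localRank ρ m p r ≤ o :=
  csInf_le' h

theorem lt_localRank {m : ℕ} {p : Set ℕ × (Set ℕ → Q)} {r X : Set ℕ}
    (hX : X ⊆ p.1) (hXi : X.Infinite) (h : Agree m X r) : ρ (p.2 X) < localRank ρ m p r := by
  have hne : {o | ∀ X ⊆ p.1, X.Infinite → Agree m X r → ρ (p.2 X) < o}.Nonempty :=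
    ⟨⨆ X : Set ℕ, Order.succ (ρ (p.2 X)), fun X _ _ _ => (Order.lt_succ _).trans_le
      (Ordinal.le_iSup (fun X : Set ℕ => Order.succ (ρ (p.2 X))) X)⟩
  exact csInf_mem hne X hX hXi h

theorem localRank_congr {m : ℕ} {p : Set ℕ × (Set ℕ → Q)} {r s : Set ℕ} (h : Agree m r s) :
    localRank ρ m p r = localRank ρ m p s := by
  have : ∀ X, Agree m X r ↔ Agree m X s := fun X => ⟨fun h' => h'.trans h, fun h' => h'.trans h.symm⟩
  simp only [localRank, this]

theorem localRank_anti {m n : ℕ} (hmn : m ≤ n) {p : Set ℕ × (Set ℕ → Q)} {r : Set ℕ} :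
    localRank ρ n p r ≤ localRank ρ m p r :=
  localRank_le fun _ hX hXi h => lt_localRank hX hXi (h.mono hmn)

theorem Refines.rank_le {A B X : Set ℕ} {f g : Set ℕ → Q} (h : Refines le ρ B g A f)
    (hX : X ⊆ B) (hXi : X.Infinite) : ρ (g X) ≤ ρ (f X) := by
  rcases h.2 X hX hXi with h | h
  · rw [h]
  · exact h.1.le

theorem Refines.localRank_le {m : ℕ} {p q : Set ℕ × (Set ℕ → Q)}
    (h : Refines le ρ p.1 p.2 q.1 q.2) (r : Set ℕ) : localRank ρ m p r ≤ localRank ρ m q r :=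
  _root_.localRank_le fun _ hX hXi hr =>
    (h.rank_le hX hXi).trans_lt (lt_localRank (hX.trans h.1) hXi hr)

theorem Refines.refl (A : Set ℕ) (f : Set ℕ → Q) : Refines le ρ A f A f :=
  ⟨subset_rfl, fun _ _ _ => Or.inl rfl⟩

theorem Refines.trans (htr : ∀ a b c, le a b → le b c → le a c) {A B C : Set ℕ}
    {f g h : Set ℕ → Q} (h₁ : Refines le ρ C h B g) (h₂ : Refines le ρ B g A f) :
    Refines le ρ C h A f := by
  refine ⟨h₁.1.trans h₂.1, fun X hX hXi => ?_⟩
  rcases h₁.2 X hX hXi with h | h <;> rcases h₂.2 X (hX.trans h₁.1) hXi with h' | h'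
  · exact Or.inl (h.trans h')
  · exact Or.inr (h ▸ h')
  · exact Or.inr (h' ▸ h)
  · exact Or.inr ⟨h.1.trans h'.1, htr _ _ _ h.2 h'.2⟩

theorem exists_minimal_competitor (htr : ∀ a b c, le a b → le b c → le a c) (m : ℕ)
    {q : Set ℕ × (Set ℕ → Q)} (hq : IsBad le q.1 q.2) :
    ∃ p, Competes le ρ m p q ∧
      ∀ p', Competes le ρ m p' p → ∀ r, localRank ρ m p r ≤ localRank ρ m p' r := by
  let D : Set ℕ × (Set ℕ → Q) → Set (Fin m) → Ordinal.{w} := fun p r =>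
    localRank ρ m p (Fin.val '' r)
  have hwf : WellFounded (fun a b : Set (Fin m) → Ordinal.{w} => a < b) := wellFounded_lt
  obtain ⟨p, hp, hmin⟩ := (InvImage.wf D hwf).has_min {p | Competes le ρ m p q}
    ⟨q, hq, Refines.refl _ _, fun _ _ => Iff.rfl⟩
  refine ⟨p, hp, fun p' hp' r => ?_⟩
  have hle : D p' ≤ D p := fun r => hp'.2.1.localRank_le _
  have hnot := hmin p' ⟨hp'.1, hp'.2.1.trans htr hp.2.1, hp'.2.2.trans hp.2.2⟩
  have heq : D p ≤ D p' := by
    by_contra hcon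
    exact hnot (lt_of_le_not_ge hle hcon)
  have hag : Agree m r (Fin.val '' (Fin.val ⁻¹' r : Set (Fin m))) := by
    intro i hi
    constructor
    · exact fun h => ⟨⟨i, hi⟩, h, rfl⟩
    · rintro ⟨j, hj, rfl⟩
      exact hj
  rw [localRank_congr hag, localRank_congr (p := p') hag]
  exact heq _

theorem exists_competitor_seq (htr : ∀ a b c, le a b → le b c → le a c)
    {q : Set ℕ × (Set ℕ → Q)} (hq : IsBad le q.1 q.2) :
    ∃ (p : ℕ → Set ℕ × (Set ℕ → Q)) (m a : ℕ → ℕ), (∀ k, IsBad le (p k).1 (p k).2) ∧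
      (∀ k, m k ≤ a k ∧ a k < m (k + 1) ∧ a k ∈ (p k).1) ∧
      (∀ k, Competes le ρ (m (k + 1)) (p (k + 1)) (p k)) ∧
      ∀ k p', Competes le ρ (m k) p' (p k) →
        ∀ r, localRank ρ (m k) (p k) r ≤ localRank ρ (m k) p' r := by
  have key : ∀ s : {s : (Set ℕ × (Set ℕ → Q)) × ℕ // IsBad le s.1.1 s.1.2 ∧
      ∀ p', Competes le ρ s.2 p' s.1 →
        ∀ r, localRank ρ s.2 s.1 r ≤ localRank ρ s.2 p' r},
      ∃ t : {s : (Set ℕ × (Set ℕ → Q)) × ℕ // IsBad le s.1.1 s.1.2 ∧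
      ∀ p', Competes le ρ s.2 p' s.1 →
        ∀ r, localRank ρ s.2 s.1 r ≤ localRank ρ s.2 p' r}, ∃ a, s.1.2 ≤ a ∧ a < t.1.2 ∧
        a ∈ s.1.1.1 ∧ Competes le ρ t.1.2 t.1.1 s.1.1 := by
    rintro ⟨⟨p, m⟩, hp, hmin⟩
    obtain ⟨a, ha, hma⟩ := hp.1.exists_gt m
    obtain ⟨p', hp', hmin'⟩ := exists_minimal_competitor (ρ := ρ) htr (a + 1) hp
    exact ⟨⟨⟨p', a + 1⟩, hp'.1, hmin'⟩, a, hma.le, Nat.lt_succ_self a, ha, hp'⟩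
  choose next a h1 h2 h3 h4 using key
  obtain ⟨p₀, hp₀, hmin₀⟩ := exists_minimal_competitor (ρ := ρ) htr 0 hq
  let s : ℕ → {s : (Set ℕ × (Set ℕ → Q)) × ℕ // IsBad le s.1.1 s.1.2 ∧
      ∀ p', Competes le ρ s.2 p' s.1 →
        ∀ r, localRank ρ s.2 s.1 r ≤ localRank ρ s.2 p' r} :=
    fun k => Nat.rec ⟨⟨p₀, 0⟩, hp₀.1, hmin₀⟩ (fun _ => next) k
  exact ⟨fun k => (s k).1.1, fun k => (s k).1.2, fun k => a (s k), fun k => (s k).2.1,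
    fun k => ⟨h1 _, h2 _, h3 _⟩, fun k => h4 (s k), fun k => (s k).2.2⟩

theorem not_isBad_of_step (htr : ∀ a b c, le a b → le b c → le a c)
    (hstep : ∀ A f, IsBad le A f → ∃ B ⊆ A, ∃ g, IsBad le B g ∧
      ∀ X ⊆ B, X.Infinite → ρ (g X) < ρ (f X) ∧ le (g X) (f X)) (A : Set ℕ) (f : Set ℕ → Q) :
    ¬ IsBad le A f := by
  classical
  intro hf
  obtain ⟨p, m, a, hbad, ha, hcomp, hmin⟩ :=
    exists_competitor_seq (ρ := ρ) (q := (A, f)) htr hf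
  have hmm : StrictMono m := strictMono_nat_of_lt_succ fun k => (ha k).1.trans_lt (ha k).2.1
  have hcomp' : ∀ k j, k ≤ j → Refines le ρ (p j).1 (p j).2 (p k).1 (p k).2 ∧
      Agree (m (k + 1)) (p j).1 (p k).1 := by
    intro k j hkj
    induction j, hkj using Nat.le_induction with
    | base => exact ⟨Refines.refl _ _, fun _ _ => Iff.rfl⟩
    | succ j hkj ih =>
      exact ⟨(hcomp j).2.1.trans htr ih.1,
        ((hcomp j).2.2.mono (hmm.monotone (by omega))).trans ih.2⟩
  have hsub : ∀ k j, k ≤ j → (p j).1 ⊆ (p k).1 := fun k j h => (hcomp' k j h).1.1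
  let A' : Set ℕ := ⋂ k, (p k).1
  have hA'k : ∀ k, A' ⊆ (p k).1 := fun k => iInter_subset _ k
  have haA : ∀ k, a k ∈ A' := by
    intro k
    refine mem_iInter.2 fun j => ?_
    rcases le_total k j with h | h
    · exact ((hcomp' k j h).2 _ (ha k).2.1).2 (ha k).2.2
    · exact hsub _ _ h (ha k).2.2
  have hA' : A'.Infinite := by
    refine (infinite_range_of_injective (f := a) ?_).mono (range_subset_iff.2 haA)
    exact (strictMono_nat_of_lt_succ fun k => (ha k).2.1.trans_le (ha (k + 1)).1).injective
  let d : ℕ → Set ℕ → Ordinal.{w} := fun k X => localRank ρ (m k) (p k) X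
  have hd : ∀ X, Antitone fun k => d k X := fun X k j hkj =>
    (localRank_anti (hmm.monotone hkj)).trans ((hcomp' k j hkj).1.localRank_le X)
  have hd_congr : ∀ {k X Y}, Agree (m k) X Y → d k X = d k Y := fun h => localRank_congr h
  let Stable : ℕ → Set ℕ → Prop := fun k X => ∀ j ≥ k, d k X ≤ d j X
  have hst_mono : ∀ {k j X}, k ≤ j → Stable k X → Stable j X := fun {k j X} hkj h i hi =>
    (hd X hkj).trans (h i (hkj.trans hi))
  have hst_ex : ∀ X, ∃ k, Stable k X := by
    intro X
    obtain ⟨_, ⟨k, rfl⟩, hk⟩ := wellFounded_lt.has_min (range fun k => d k X) ⟨_, 0, rfl⟩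
    exact ⟨k, fun j _ => not_lt.1 (hk _ ⟨j, rfl⟩)⟩
  have hst_rank : ∀ {k X}, X ⊆ A' → X.Infinite → Stable k X →
      d k X ≤ Order.succ (ρ ((p k).2 X)) := by
    intro k X hX hXi hk
    obtain ⟨n, hn⟩ := (hbad k).2.1 X (hX.trans (hA'k k)) hXi
    refine (hk (max k n) (le_max_left _ _)).trans (localRank_le fun Y hY hYi hYX => ?_)
    refine Order.lt_succ_of_le (((hcomp' k _ (le_max_left _ _)).1.rank_le hY hYi).trans ?_)
    rw [hn Y (hY.trans (hsub _ _ (le_max_left _ _))) hYi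
      (hYX.symm.mono ((le_max_right k n).trans (hmm.id_le _)))]
  have hst_eq : ∀ {k j X}, k ≤ j → X ⊆ A' → X.Infinite → Stable k X →
      (p j).2 X = (p k).2 X := by
    intro k j X hkj hX hXi hk
    rcases (hcomp' k j hkj).1.2 X (hX.trans (hA'k j)) hXi with h | h
    · exact h
    · exfalso
      have h1 := (lt_localRank (ρ := ρ) (m := m k) (p := p k) (hX.trans (hA'k k)) hXi
        (fun _ _ => Iff.rfl)).trans_le ((hk j hkj).trans
          (hst_rank hX hXi (hst_mono hkj hk)))
      exact absurd h.1 (not_lt.2 (Order.lt_succ_iff.1 h1))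
  choose κ hκ using hst_ex
  let F : Set ℕ → Q := fun X => (p (κ X)).2 X
  have hF : ∀ {k X}, X ⊆ A' → X.Infinite → Stable k X → F X = (p k).2 X := by
    intro k X hX hXi hk
    exact (hst_eq (le_max_left (κ X) k) hX hXi (hκ X)).symm.trans
      (hst_eq (le_max_right (κ X) k) hX hXi hk)
  have hF_le : ∀ k {X}, X ⊆ A' → X.Infinite → F X = (p k).2 X ∨
      (ρ (F X) < ρ ((p k).2 X) ∧ le (F X) ((p k).2 X)) := by
    intro k X hX hXi
    rw [hF hX hXi (hst_mono (le_max_left (κ X) k) (hκ X))]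
    exact (hcomp' k _ (le_max_right _ _)).1.2 X (hX.trans (hA'k _)) hXi
  obtain ⟨B, hBA, hB, hopen⟩ := exists_forall_openOn_not hA'
    (U := fun k X => ∃ j ≥ k, d j X < d k X) (by
      rintro k X - - ⟨j, hkj, hj⟩
      refine ⟨m j, fun Y _ _ hXY => ⟨j, hkj, ?_⟩⟩
      rwa [← hd_congr hXY, ← hd_congr (hXY.mono (hmm.monotone hkj))])
  have hopen' : ∀ k, OpenOn B (Stable k) := by
    intro k
    have := hopen k
    simp only [not_exists, not_and, not_lt] at this
    exact this
  have hFbad : IsBad le B F := by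
    refine ⟨hB, fun X hX hXi => ?_, fun X hX hXi => ?_⟩
    · obtain ⟨n, hn⟩ := hopen' _ X hX hXi (hκ X)
      obtain ⟨n', hn'⟩ := (hbad (κ X)).2.1 X ((hX.trans hBA).trans (hA'k _)) hXi
      refine ⟨max n n', fun Y hY hYi hXY => ?_⟩
      rw [hF (hY.trans hBA) hYi (hn Y hY hYi (hXY.mono (le_max_left _ _)))]
      exact hn' Y ((hY.trans hBA).trans (hA'k _)) hYi (hXY.mono (le_max_right _ _))
    · rw [hF (hX.trans hBA) hXi (hst_mono (le_max_left (κ X) (κ (tl X))) (hκ X)),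
        hF (((tl_subset X).trans hX).trans hBA) hXi.tl
          (hst_mono (le_max_right (κ X) (κ (tl X))) (hκ (tl X)))]
      exact (hbad _).2.2 X ((hX.trans hBA).trans (hA'k _)) hXi
  obtain ⟨C, hCB, g, hg, hgF⟩ := hstep B F hFbad
  have hCA : C ⊆ A' := hCB.trans hBA
  have hCi := hg.1
  set k := κ C with hk
  have hgk : ∀ X ⊆ C, X.Infinite → ρ (g X) < ρ ((p k).2 X) ∧ le (g X) ((p k).2 X) := by
    intro X hX hXi
    have h1 := hgF X hX hXi
    rcases hF_le k (hX.trans hCA) hXi with h | h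
    · rwa [← h]
    · exact ⟨h1.1.trans h.1, htr _ _ _ h1.2 h.2⟩
  let A'' : Set ℕ := ((p k).1 ∩ Iio (m k)) ∪ C
  have hA''k : A'' ⊆ (p k).1 := union_subset inter_subset_left (hCA.trans (hA'k k))
  let f' : Set ℕ → Q := fun X => if X ⊆ C then g X else (p k).2 X
  have hlocal : ∀ X ⊆ A'', ∀ Y ⊆ A'', Agree (m k) X Y → X ⊆ C → Y ⊆ C := by
    intro X _ Y hY hXY hXC y hy
    rcases hY hy with h | h
    · exact hXC ((hXY y h.2).2 hy)
    · exact h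
  have hcompet : Competes le ρ (m k) (A'', f') (p k) := by
    refine ⟨⟨hCi.mono subset_union_right, fun X hX hXi => ?_, fun X hX hXi => ?_⟩,
      ⟨hA''k, fun X hX hXi => ?_⟩, fun i hi => ?_⟩
    · by_cases hXC : X ⊆ C
      · obtain ⟨n, hn⟩ := hg.2.1 X hXC hXi
        refine ⟨max n (m k), fun Y hY hYi hXY => ?_⟩
        have hYC := hlocal X hX Y hY (hXY.mono (le_max_right _ _)) hXC
        simp only [f', if_pos hXC, if_pos hYC]
        exact hn Y hYC hYi (hXY.mono (le_max_left _ _))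
      · obtain ⟨n, hn⟩ := (hbad k).2.1 X (hX.trans hA''k) hXi
        refine ⟨max n (m k), fun Y hY hYi hXY => ?_⟩
        have hYC : ¬ Y ⊆ C := fun h =>
          hXC (hlocal Y hY X hX (hXY.symm.mono (le_max_right _ _)) h)
        simp only [f', if_neg hXC, if_neg hYC]
        exact hn Y (hY.trans hA''k) hYi (hXY.mono (le_max_left _ _))
    · by_cases hXC : X ⊆ C
      · have hYC := (tl_subset X).trans hXC
        simp only [f', if_pos hXC, if_pos hYC]
        exact hg.2.2 X hXC hXi
      · have hb := (hbad k).2.2 X (hX.trans hA''k) hXi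
        by_cases hYC : tl X ⊆ C
        · simp only [f', if_neg hXC, if_pos hYC]
          exact fun h => hb (htr _ _ _ h (hgk _ hYC hXi.tl).2)
        · simpa only [f', if_neg hXC, if_neg hYC] using hb
    · by_cases hXC : X ⊆ C
      · simp only [f', if_pos hXC]
        exact Or.inr (hgk X hXC hXi)
      · simp only [f', if_neg hXC, true_or]
    · exact ⟨fun h => hA''k h, fun h => Or.inl ⟨h, hi⟩⟩
  have hsucc := hst_rank hCA hCi (hκ C)
  have hle : localRank ρ (m k) (A'', f') C ≤ ρ ((p k).2 C) := by
    refine localRank_le fun Y hY hYi hYC => ?_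
    have hYC' : Y ⊆ C := hlocal C subset_union_right Y hY hYC.symm subset_rfl
    simp only [f', if_pos hYC']
    refine (hgk Y hYC' hYi).1.trans_le (Order.lt_succ_iff.1 ?_)
    exact (lt_localRank (hY.trans hA''k) hYi hYC).trans_le hsucc
  have hlt : ρ ((p k).2 C) < localRank ρ (m k) (p k) C :=
    lt_localRank (hCA.trans (hA'k k)) hCi fun _ _ => Iff.rfl
  exact absurd (hmin k _ hcompet C) (not_le.2 (hle.trans_lt hlt))

end BadArray

section BadArray

variable {Q : Type*} {le : Q → Q → Prop} {ρ : Q → Ordinal.{w}}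

theorem IsBad.mono {A B : Set ℕ} {f : Set ℕ → Q} (h : IsBad le A f) (hBA : B ⊆ A)
    (hB : B.Infinite) : IsBad le B f :=
  ⟨hB, h.2.1.mono hBA, fun X hX => h.2.2 X (hX.trans hBA)⟩

theorem exists_label_le {A : Set ℕ} (hA : A.Infinite) {f : Set ℕ → Q} (hf : LocConst A f)
    (L : List (Q → Ordinal.{w})) :
    ∃ B ⊆ A, B.Infinite ∧ ∀ l ∈ L, ∀ X ⊆ B, X.Infinite → l (f X) ≤ l (f (tl X)) := by
  induction L with
  | nil => exact ⟨A, subset_rfl, hA, by simp⟩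
  | cons l L ih =>
    obtain ⟨B, hBA, hB, hL⟩ := ih
    obtain ⟨C, hCB, hC, hom⟩ := ((((hf.mono hBA).prodMk (hf.mono hBA).comp_tl).comp
      (fun p => l p.1 ≤ l p.2)).openOn).exists_homogeneous hB
    refine ⟨C, hCB.trans hBA, hC, List.forall_mem_cons.2 ⟨?_, fun l' hl' X hX =>
      hL l' hl' X (hX.trans hCB)⟩⟩
    rcases hom with h | h
    · exact h
    · exfalso
      have hX : ∀ n : ℕ, tl^[n] C ⊆ C ∧ (tl^[n] C).Infinite := by
        intro n
        induction n with
        | zero => exact ⟨subset_rfl, hC⟩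
        | succ n ih =>
          rw [Function.iterate_succ_apply']
          exact ⟨(tl_subset _).trans ih.1, ih.2.tl⟩
      obtain ⟨_, ⟨n, rfl⟩, hn⟩ := wellFounded_lt.has_min
        (range fun n : ℕ => l (f (tl^[n] C))) ⟨_, 0, rfl⟩
      refine hn _ ⟨n + 1, rfl⟩ ?_
      simp only [Function.iterate_succ_apply']
      exact not_le.1 (h _ (hX n).1 (hX n).2)

/-- A well-quasi-ordering criterion: it suffices to decompose the elements into smaller ones in
such a way that non-comparability, in presence of monotone labels, is witnessed on children. -/
theorem exists_le_of_children (htr : ∀ a b c, le a b → le b c → le a c)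
    (L : List (Q → Ordinal.{w})) (Ch : Bool → Q → Set Q)
    (hCh : ∀ i p, ∀ p' ∈ Ch i p, ρ p' < ρ p ∧ le p' p)
    (hcomp : ∀ p q, ¬ le p q → (∀ l ∈ L, l p ≤ l q) →
      ∃ i, ∃ p' ∈ Ch i p, ∀ q' ∈ Ch i q, ¬ le p' q')
    (u : ℕ → Q) : ∃ i j, i < j ∧ le (u i) (u j) := by
  by_contra! hu
  refine not_isBad_of_step (ρ := ρ) htr ?_ univ (fun X => u (sInf X)) ⟨infinite_univ, ?_, ?_⟩
  · intro A f hf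
    obtain ⟨B, hBA, hB, hL⟩ := exists_label_le hf.1 hf.2.1 L
    have hfB := hf.mono hBA hB
    have hex : ∀ pq : Q × Q, ∃ i, ∃ c, (¬ le pq.1 pq.2 → (∀ l ∈ L, l pq.1 ≤ l pq.2) →
        c ∈ Ch i pq.1 ∧ ∀ q' ∈ Ch i pq.2, ¬ le c q') := by
      intro pq
      by_cases h : ¬ le pq.1 pq.2 ∧ ∀ l ∈ L, l pq.1 ≤ l pq.2
      · obtain ⟨i, c, hc, hc'⟩ := hcomp _ _ h.1 h.2
        exact ⟨i, c, fun _ _ => ⟨hc, hc'⟩⟩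
      · exact ⟨true, pq.1, fun h1 h2 => absurd ⟨h1, h2⟩ h⟩
    choose ι c hc using hex
    have hpair := hfB.2.1.prodMk hfB.2.1.comp_tl
    obtain ⟨C, hCB, hC, i, hi⟩ : ∃ C ⊆ B, C.Infinite ∧ ∃ i, ∀ X ⊆ C, X.Infinite →
        ι (f X, f (tl X)) = i := by
      obtain ⟨C, hCB, hC, h | h⟩ := ((hpair.comp (fun p => ι p = true)).openOn).exists_homogeneous hB
      · exact ⟨C, hCB, hC, true, h⟩
      · exact ⟨C, hCB, hC, false, fun X hX hXi => by simpa using h X hX hXi⟩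
    have hspec : ∀ X ⊆ C, X.Infinite → c (f X, f (tl X)) ∈ Ch i (f X) ∧
        ∀ q' ∈ Ch i (f (tl X)), ¬ le (c (f X, f (tl X))) q' := by
      intro X hX hXi
      have := hc (f X, f (tl X)) (hfB.2.2 X (hX.trans hCB) hXi)
        fun l hl => hL l hl X (hX.trans hCB) hXi
      rwa [hi X hX hXi] at this
    refine ⟨C, hCB.trans hBA, fun X => c (f X, f (tl X)), ⟨hC, (hpair.mono hCB).comp c, ?_⟩, ?_⟩
    · intro X hX hXi
      exact (hspec X hX hXi).2 _ (hspec (tl X) ((tl_subset X).trans hX) hXi.tl).1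
    · exact fun X hX hXi => hCh i _ _ (hspec X hX hXi).1
  · intro X _ hXi
    refine ⟨sInf X + 1, fun Y _ _ hXY => ?_⟩
    simp only [hXY.sInf_eq hXi.nonempty (Nat.lt_succ_self _)]
  · intro X _ hXi
    refine hu _ _ ?_
    have hmem := Nat.sInf_mem hXi.tl.nonempty
    exact lt_of_le_of_ne (Nat.sInf_le hmem.1) (Ne.symm hmem.2)

end BadArray

/-- Every element of `A` is below every element of `B`. -/
def SLt {X : Type*} [LT X] (A B : Set X) : Prop := ∀ a ∈ A, ∀ b ∈ B, a < b

/-- The suborder `C` embeds into the suborder `C'`. -/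
def Emb {X Y : Type*} [Preorder X] [Preorder Y] (C : Set X) (C' : Set Y) : Prop :=
  ∃ f : X → Y, MapsTo f C C' ∧ StrictMonoOn f C

/-- The fibre of `r` over `d` inside `C`. -/
def fib {X D : Type*} (C : Set X) (r : X → D) (d : D) : Set X := {x ∈ C | r x = d}

/-- `S` contains no copy of the rationals. -/
def QFree {X : Type*} [Preorder X] (S : Set X) : Prop :=
  ¬ ∃ f : ℚ → X, (∀ q, f q ∈ S) ∧ StrictMono f

theorem fib_subset {X D : Type*} (C : Set X) (r : X → D) (d : D) : fib C r d ⊆ C := fun _ h => h.1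

theorem fib_nonempty {X D : Type*} {C : Set X} {r : X → D} {d : D} (h : d ∈ r '' C) : (fib C r d).Nonempty := by
  obtain ⟨x, hx, rfl⟩ := h
  exact ⟨x, hx, rfl⟩

section Basic

variable {X Y Z D : Type*} [LinearOrder X] [LinearOrder Y] [LinearOrder Z] [LinearOrder D]

theorem SLt.mono {A B A' B' : Set X} (h : SLt A B) (hA : A' ⊆ A) (hB : B' ⊆ B) : SLt A' B' :=
  fun a ha b hb => h a (hA ha) b (hB hb)

theorem Emb.refl (C : Set X) : Emb C C := ⟨id, mapsTo_id C, strictMonoOn_id⟩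

theorem Emb.of_subset {C C' : Set X} (h : C ⊆ C') : Emb C C' := ⟨id, h, strictMonoOn_id⟩

theorem Emb.trans {A : Set X} {B : Set Y} {C : Set Z} (h : Emb A B) (h' : Emb B C) : Emb A C := by
  obtain ⟨f, hf, hf'⟩ := h
  obtain ⟨g, hg, hg'⟩ := h'
  exact ⟨g ∘ f, hg.comp hf, hg'.comp hf' hf⟩

theorem Emb.dual {C : Set X} {C' : Set Y} (h : Emb C C') :
    Emb (OrderDual.ofDual ⁻¹' C) (OrderDual.ofDual ⁻¹' C') := by
  obtain ⟨f, hf, hf'⟩ := h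
  exact ⟨OrderDual.toDual ∘ f ∘ OrderDual.ofDual, fun x hx => hf hx,
    fun x hx y hy hxy => hf' hy hx hxy⟩

theorem Emb.of_dual {C : Set X} {C' : Set Y}
    (h : Emb (OrderDual.ofDual ⁻¹' C) (OrderDual.ofDual ⁻¹' C')) : Emb C C' := by
  obtain ⟨f, hf, hf'⟩ := h
  exact ⟨OrderDual.ofDual ∘ f ∘ OrderDual.toDual, fun x hx => hf hx,
    fun x hx y hy hxy => hf' hy hx hxy⟩

theorem slt_fib {C : Set X} {r : X → D} (hr : MonotoneOn r C) {d e : D} (h : d < e) :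
    SLt (fib C r d) (fib C r e) := by
  rintro x ⟨hx, rfl⟩ y ⟨hy, rfl⟩
  by_contra! hyx
  exact absurd (hr hy hx hyx) (not_le.2 h)

theorem Emb.nonempty {C : Set X} {C' : Set Y} (h : Emb C C') (hC : C.Nonempty) : C'.Nonempty := by
  obtain ⟨f, hf, -⟩ := h
  exact hC.image f |>.mono hf.image_subset

/-- Embeddings of the fibres of a monotone map into increasing targets can be glued. -/
theorem Emb.glue {C : Set X} {C' : Set Y} {r : X → D} {T : D → Set Y} (hC : C.Nonempty)
    (hr : MonotoneOn r C) (h : ∀ d ∈ r '' C, Emb (fib C r d) (T d))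
    (hT : ∀ d ∈ r '' C, T d ⊆ C')
    (hlt : ∀ d ∈ r '' C, ∀ e ∈ r '' C, d < e → SLt (T d) (T e)) : Emb C C' := by
  obtain ⟨x₀, hx₀⟩ := hC
  obtain ⟨y₀, -⟩ := (h _ (mem_image_of_mem r hx₀)).nonempty (fib_nonempty (mem_image_of_mem r hx₀))
  have : Nonempty (X → Y) := ⟨fun _ => y₀⟩
  choose! f hf hf' using h
  have hmem : ∀ x ∈ C, f (r x) x ∈ T (r x) := fun x hx =>
    hf _ (mem_image_of_mem r hx) ⟨hx, rfl⟩
  refine ⟨fun x => f (r x) x, fun x hx => hT _ (mem_image_of_mem r hx) (hmem x hx),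
    fun x hx y hy hxy => ?_⟩
  rcases (hr hx hy hxy.le).lt_or_eq with hlt' | heq
  · exact hlt _ (mem_image_of_mem r hx) _ (mem_image_of_mem r hy) hlt' _ (hmem x hx) _ (hmem y hy)
  · simp only [heq]
    exact hf' _ (mem_image_of_mem r hy) ⟨hx, heq⟩ ⟨hy, rfl⟩ hxy

theorem Emb.union {A B : Set X} {A' B' : Set Y} (h : SLt A B) (h' : SLt A' B')
    (hA : Emb A A') (hB : Emb B B') : Emb (A ∪ B) (A' ∪ B') := by
  classical
  obtain ⟨f, hf, hf'⟩ := hA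
  obtain ⟨g, hg, hg'⟩ := hB
  have hBA : ∀ x ∈ B, x ∉ A := fun x hx hxA => lt_irrefl _ (h x hxA x hx)
  refine ⟨fun x => if x ∈ A then f x else g x, ?_, ?_⟩
  · rintro x (hx | hx)
    · simpa [hx] using Or.inl (hf hx)
    · simpa [hBA x hx] using Or.inr (hg hx)
  · rintro x (hx | hx) y (hy | hy) hxy
    · simpa [hx, hy] using hf' hx hy hxy
    · simpa [hx, hBA y hy] using h' _ (hf hx) _ (hg hy)
    · exact absurd (h y hy x hx) (not_lt.2 hxy.le)
    · simpa [hBA x hx, hBA y hy] using hg' hx hy hxy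

theorem SLt.dual {A B : Set X} (h : SLt A B) :
    SLt (OrderDual.ofDual ⁻¹' B) (OrderDual.ofDual ⁻¹' A) :=
  fun b hb a ha => h a ha b hb

theorem QFree.mono {S T : Set X} (h : QFree T) (hST : S ⊆ T) : QFree S :=
  fun ⟨f, hf, hf'⟩ => h ⟨f, fun q => hST (hf q), hf'⟩

theorem not_qFree_of_dense {R : Set X} (hR : R.Nontrivial)
    (hd : ∀ x ∈ R, ∀ y ∈ R, x < y → ∃ z ∈ R, x < z ∧ z < y) : ¬ QFree R := by
  have : DenselyOrdered R := ⟨fun x y hxy =>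
    let ⟨z, hz, h1, h2⟩ := hd x x.2 y y.2 hxy
    ⟨⟨z, hz⟩, h1, h2⟩⟩
  have : Nontrivial R := hR.coe_sort
  obtain ⟨f⟩ := Order.embedding_from_countable_to_dense ℚ R
  exact fun h => h ⟨fun q => f q, fun q => (f q).2, fun p q hpq => f.strictMono hpq⟩

/-- A property of suborders closed under the formation of ordered sums, increasing and decreasing
unions, holding for sets avoiding `S` and failing for the whole order, is witnessed to fail by a
dense set of pairwise inequivalent points of `S`. -/
theorem exists_dense_of_not {P : Set X → Prop} {S : Set X}
    (hmono : ∀ C C', C ⊆ C' → P C' → P C) (hS : ∀ C, Disjoint C S → P C) (hsing : ∀ x, P {x})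
    (hunion : ∀ A B, SLt A B → P A → P B → P (A ∪ B))
    (hup : ∀ C, (∀ y ∈ C, P (C ∩ Iic y)) → P C)
    (hdown : ∀ C, (∀ y ∈ C, P (C ∩ Ici y)) → P C) (hnot : ¬ P univ) :
    ∃ R ⊆ S, R.Nontrivial ∧ (∀ x ∈ R, ∀ y ∈ R, x < y → ∃ z ∈ R, x < z ∧ z < y) ∧
      (∀ x ∈ R, ∀ y ∈ R, x < y → ¬ P (Icc x y)) ∧ ∀ s ∈ S, ∃ r ∈ R, P (uIcc s r) := by
  have htri : ∀ x y z, x ≤ y → y ≤ z → P (Icc x y) → P (Icc y z) → P (Icc x z) := by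
    intro x y z hxy hyz h1 h2
    rw [← Icc_union_Ioc_eq_Icc hxy hyz]
    exact hunion _ _ (fun a ha b hb => ha.2.trans_lt hb.1) h1
      (hmono _ _ Ioc_subset_Icc_self h2)
  have htrans : ∀ x y z, P (uIcc x y) → P (uIcc y z) → P (uIcc x z) := by
    intro x y z h1 h2
    rcases le_total x y with hxy | hxy <;> rcases le_total y z with hyz | hyz
    · rw [uIcc_of_le hxy] at h1
      rw [uIcc_of_le hyz] at h2
      rw [uIcc_of_le (hxy.trans hyz)]
      exact htri _ _ _ hxy hyz h1 h2
    · rcases le_total x z with hxz | hxz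
      · exact hmono _ _ (uIcc_subset_uIcc_left (by rw [uIcc_of_le hxy]; exact ⟨hxz, hyz⟩)) h1
      · refine hmono _ _ (uIcc_subset_uIcc_right ?_) h2
        rw [uIcc_of_ge hyz]; exact ⟨hxz, hxy⟩
    · rcases le_total x z with hxz | hxz
      · refine hmono _ _ (uIcc_subset_uIcc_right ?_) h2
        rw [uIcc_of_le hyz]; exact ⟨hxy, hxz⟩
      · refine hmono _ _ (uIcc_subset_uIcc_left ?_) h1
        rw [uIcc_of_ge hxy]; exact ⟨hyz, hxz⟩
    · rw [uIcc_of_ge hxy] at h1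
      rw [uIcc_of_ge hyz] at h2
      rw [uIcc_of_ge (hyz.trans hxy)]
      exact htri _ _ _ hyz hxy h2 h1
  have hbet : ∀ x y, x < y → ¬ P (Icc x y) →
      ∃ z ∈ S, x < z ∧ z < y ∧ ¬ P (Icc x z) ∧ ¬ P (Icc z y) := by
    intro x y hxy hP
    by_contra! hno
    let L := {z ∈ Icc x y | P (Icc x z)}
    let U := {z ∈ Icc x y | P (Icc z y)}
    let M := {z ∈ Icc x y | ¬ P (Icc x z) ∧ ¬ P (Icc z y)}
    have hL : P L := hup _ fun z hz => hmono _ (Icc x z) (fun t ht => ⟨ht.1.1.1, ht.2⟩) hz.2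
    have hU : P U := hdown _ fun z hz => hmono _ (Icc z y) (fun t ht => ⟨ht.2, ht.1.1.2⟩) hz.2
    have hM : P M := by
      refine hS _ (disjoint_left.2 fun z hz hzS => ?_)
      refine hz.2.2 (hno z hzS ?_ ?_ hz.2.1)
      · refine hz.1.1.lt_of_ne ?_
        rintro rfl
        exact hz.2.1 (by rw [Icc_self]; exact hsing _)
      · refine hz.1.2.lt_of_ne ?_
        rintro rfl
        exact hz.2.2 (by rw [Icc_self]; exact hsing _)
    have hLM : SLt L M := by
      intro a ha b hb
      by_contra! hba
      exact hb.2.1 (hmono _ _ (Icc_subset_Icc_right hba) ha.2)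
    have hLMU : SLt (L ∪ M) U := by
      rintro a ha b hb
      by_contra! hba
      rcases ha with ha | ha
      · exact hP (htri x a y ha.1.1 ha.1.2 ha.2 (hmono _ _ (Icc_subset_Icc_left hba) hb.2))
      · exact ha.2.2 (hmono _ _ (Icc_subset_Icc_left hba) hb.2)
    refine hP (hmono _ _ (fun z hz => ?_) (hunion _ _ hLMU (hunion _ _ hLM hL hM) hU))
    by_cases h1 : P (Icc x z)
    · exact Or.inl (Or.inl ⟨hz, h1⟩)
    · by_cases h2 : P (Icc z y)
      · exact Or.inr ⟨hz, h2⟩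
      · exact Or.inl (Or.inr ⟨hz, h1, h2⟩)
  let E : Setoid S :=
    { r := fun x y => P (uIcc x.1 y.1)
      iseqv := ⟨fun x => by rw [uIcc_self]; exact hsing _,
        fun {x y} h => by rwa [uIcc_comm], fun {x y z} => htrans x.1 y.1 z.1⟩ }
  let rep : S → X := fun s => (Quotient.out (Quotient.mk E s)).1
  have hrep : ∀ s : S, P (uIcc (rep s) s.1) := fun s => Quotient.exact (Quotient.out_eq (Quotient.mk E s))
  have hrep_eq : ∀ s t : S, P (uIcc (rep s) (rep t)) → rep s = rep t := by
    intro s t h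
    have : P (uIcc s.1 t.1) := htrans _ _ _ (htrans _ _ _ (by rw [uIcc_comm]; exact hrep s) h) (hrep t)
    have : (Quotient.mk E s) = Quotient.mk E t := Quotient.sound this
    simp only [rep, this]
  have hne : ∀ x ∈ range rep, ∀ y ∈ range rep, x < y → ¬ P (Icc x y) := by
    rintro _ ⟨s, rfl⟩ _ ⟨t, rfl⟩ hlt hP
    rw [← uIcc_of_le hlt.le] at hP
    exact hlt.ne (hrep_eq s t hP)
  have hloc : ∀ x y, x < y → ¬ P (Icc x y) →
      ∃ z, ∃ hz : z ∈ S, x < z ∧ z < y ∧ x < rep ⟨z, hz⟩ ∧ rep ⟨z, hz⟩ < y := by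
    intro x y hxy hP
    obtain ⟨z, hz, hxz, hzy, h1, h2⟩ := hbet x y hxy hP
    have := hrep ⟨z, hz⟩
    refine ⟨z, hz, hxz, hzy, ?_, ?_⟩
    · by_contra! hle
      rw [uIcc_of_le (hle.trans hxz.le)] at this
      exact h1 (hmono _ _ (Icc_subset_Icc_left hle) this)
    · by_contra! hle
      rw [uIcc_of_ge (hzy.le.trans hle)] at this
      exact h2 (hmono _ _ (Icc_subset_Icc_right hle) this)
  refine ⟨range rep, ?_, ?_, ?_, hne, fun s hs => ⟨rep ⟨s, hs⟩, ⟨_, rfl⟩, ?_⟩⟩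
  · rintro _ ⟨s, rfl⟩
    exact (Quotient.out (Quotient.mk E s)).2
  · obtain ⟨x, y, hP⟩ : ∃ x y, ¬ P (Icc x y) := by
      by_contra! hall
      refine hnot (hup _ fun y _ => hdown _ fun x _ => hmono _ _ ?_ (hall x y))
      exact fun z hz => ⟨hz.2, hz.1.2⟩
    have hxy : x < y := by
      by_contra! hle
      refine hP (hmono _ _ (fun z hz => ?_) (hsing x))
      exact le_antisymm (hz.2.trans hle) hz.1
    obtain ⟨z, hz, hxz, hzy, -, h2⟩ := hbet x y hxy hP
    obtain ⟨z', hz', hzz', hz'y, h1', h2'⟩ := hbet z y hzy h2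
    refine ⟨rep ⟨z, hz⟩, ⟨_, rfl⟩, rep ⟨z', hz'⟩, ⟨_, rfl⟩, fun heq => h1' ?_⟩
    rw [← uIcc_of_le hzz'.le]
    refine htrans _ _ _ ?_ (hrep ⟨z', hz'⟩)
    rw [← heq, uIcc_comm]
    exact hrep ⟨z, hz⟩
  · intro x hx y hy hxy
    obtain ⟨z, hz, -, -, h1, h2⟩ := hloc x y hxy (hne x hx y hy hxy)
    exact ⟨_, ⟨_, rfl⟩, h1, h2⟩
  · rw [uIcc_comm]
    exact hrep ⟨s, hs⟩

end Basic

/-- The suborder `C` as a suborder of the dual order. -/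
abbrev dualSet {X : Type*} (C : Set X) : Set Xᵒᵈ := OrderDual.ofDual ⁻¹' C

/-- A family of suborders as a family of suborders of the dual order. -/
abbrev dualFamily {X : Type*} (𝓑 : Set (Set X)) : Set (Set Xᵒᵈ) :=
  {B | OrderDual.toDual ⁻¹' B ∈ 𝓑}

/-- The ordinal `μ` embeds into `R`. -/
def OrdEmb {X : Type v} [LT X] (μ : Ordinal.{v}) (R : Set X) : Prop :=
  ∃ g : Ordinal.{v} → X, (∀ ξ < μ, g ξ ∈ R) ∧ ∀ ξ η, ξ < η → η < μ → g ξ < g η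

/-- `r` splits `C` into a sum of fibres indexed by a regular cardinal `κ`, where every fibre
embeds into cofinally many others. -/
structure IsUp {X : Type v} [LinearOrder X] (C : Set X) (r : X → X) (κ : Cardinal.{v}) : Prop where
  mono : MonotoneOn r C
  isWF : (r '' C).IsWF
  card_lt : ∀ d ∈ r '' C, #(r '' C ∩ Iio d : Set X) < κ
  exists_gt : ∀ s ⊆ r '' C, #s < κ → ∃ d ∈ r '' C, ∀ e ∈ s, e < d
  recur : ∀ d ∈ r '' C, ∀ e ∈ r '' C, ∃ d' ∈ r '' C, e ≤ d' ∧ Emb (fib C r d) (fib C r d')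

/-- Every member of the family contains increasing sequences of members of any length below `a`. -/
def UpBase {Y : Type v} [LT Y] (𝓑 : Set (Set Y)) (a : Ordinal.{v}) : Prop :=
  ∀ I ∈ 𝓑, ∀ μ < a, ∃ J : Ordinal.{v} → Set Y, ∀ ξ < μ, J ξ ∈ 𝓑 ∧ J ξ ⊆ I ∧
    ∀ η < ξ, SLt (J η) (J ξ)

/-- `r` splits `C` into a dense sum of fibres over a countable union of scattered sets, such
that all fibres embed into each member of a base of subintervals. -/
structure IsShuf {X : Type v} [LinearOrder X] (C : Set X) (r : X → X) (a b : Ordinal.{v}) :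
    Prop where
  mono : MonotoneOn r C
  cover : ∃ S : ℕ → Set X, r '' C ⊆ ⋃ n, S n ∧ ∀ n, QFree (S n)
  ordEmb_lt : ∀ μ, OrdEmb μ (r '' C) → μ < a
  ordEmb_dual_lt : ∀ μ, OrdEmb μ (dualSet (r '' C)) → μ < b
  base : ∃ 𝓑 : Set (Set X), 𝓑.Nonempty ∧ UpBase 𝓑 a ∧ UpBase (dualFamily 𝓑) b ∧
    ∀ I ∈ 𝓑, I ⊆ C ∧ ∀ d ∈ r '' C, Emb (fib C r d) I

section Compare

variable {X Y : Type v} [LinearOrder X] [LinearOrder Y]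

theorem OrdEmb.mono {μ : Ordinal.{v}} {R R' : Set X} (h : OrdEmb μ R) (hR : R ⊆ R') :
    OrdEmb μ R' :=
  let ⟨g, hg, hg'⟩ := h
  ⟨g, fun ξ hξ => hR (hg ξ hξ), hg'⟩

theorem IsUp.emb {C : Set X} {r : X → X} {κ : Cardinal.{v}} {C' : Set Y} {r' : Y → Y}
    {κ' : Cardinal.{v}} (h : IsUp C r κ) (h' : IsUp C' r' κ') (hC : C.Nonempty) (hκ : κ ≤ κ')
    (hf : ∀ d ∈ r '' C, ∃ e ∈ r' '' C', Emb (fib C r d) (fib C' r' e)) : Emb C C' := by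
  have hwf : WellFounded (fun a b : ↥(r '' C) => a.1 < b.1) := h.isWF
  have hstep : ∀ (d : ↥(r '' C)) (g : ∀ e : ↥(r '' C), e.1 < d.1 → ↥(r' '' C')),
      ∃ e : ↥(r' '' C'), Emb (fib C r d) (fib C' r' e) ∧ ∀ e' h, (g e' h).1 < e.1 := by
    intro d g
    let s : Set Y := range fun e : ↥(r '' C ∩ Iio d.1 : Set X) => (g ⟨e.1, e.2.1⟩ e.2.2).1
    obtain ⟨d₁, hd₁, hlt⟩ := h'.exists_gt s
      (by rintro _ ⟨e, rfl⟩; exact (g _ _).2)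
      (mk_range_le.trans_lt ((h.card_lt d.1 d.2).trans_le hκ))
    obtain ⟨e, he, hde⟩ := hf d.1 d.2
    obtain ⟨e', he', hle, hee'⟩ := h'.recur e he d₁ hd₁
    exact ⟨⟨e', he'⟩, hde.trans hee', fun x hx => (hlt _ ⟨⟨x.1, x.2, hx⟩, rfl⟩).trans_le hle⟩
  choose F hF hF' using hstep
  let G : ↥(r '' C) → ↥(r' '' C') := hwf.fix F
  have hG : ∀ d, G d = F d fun e _ => G e := fun d => hwf.fix_eq F d
  have hGlt : ∀ d e : ↥(r '' C), d.1 < e.1 → (G d).1 < (G e).1 := by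
    intro d e hde
    rw [hG e]
    exact hF' e (fun e' _ => G e') d hde
  classical
  refine Emb.glue (r := r) (T := fun d => if hd : d ∈ r '' C then fib C' r' (G ⟨d, hd⟩) else ∅)
    hC h.mono ?_ ?_ ?_
  · intro d hd
    simp only [dif_pos hd]
    rw [hG]
    exact hF ⟨d, hd⟩ _
  · intro d hd
    simp only [dif_pos hd]
    exact fib_subset _ _ _
  · intro d hd e he hde
    simp only [dif_pos hd, dif_pos he]
    exact slt_fib h'.mono (hGlt ⟨d, hd⟩ ⟨e, he⟩ hde)

theorem exists_ordEmb_of_isWF {S : Set X} (hS : S.IsWF) (hne : S.Nonempty) :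
    ∃ (μ : Ordinal.{v}) (τ : X → Ordinal.{v}), (∀ s ∈ S, τ s < μ) ∧ StrictMonoOn τ S ∧
      OrdEmb μ S := by
  classical
  have : WellFoundedLT S := ⟨hS⟩
  obtain ⟨s₀, hs₀⟩ := hne
  refine ⟨Ordinal.type (α := S) (· < ·),
    fun s => if h : s ∈ S then Ordinal.typein (α := S) (· < ·) ⟨s, h⟩ else 0, ?_, ?_,
    fun ξ => if h : ξ < Ordinal.type (α := S) (· < ·) then
      (Ordinal.enum (α := S) (· < ·) ⟨ξ, h⟩).1 else s₀, ?_, ?_⟩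
  · intro s hs
    simp only [dif_pos hs]
    exact Ordinal.typein_lt_type _ _
  · intro s hs t ht hst
    simp only [dif_pos hs, dif_pos ht]
    exact (Ordinal.typein_lt_typein (α := S) (· < ·)).2 hst
  · intro ξ hξ
    simp only [dif_pos hξ]
    exact Subtype.coe_prop _
  · intro ξ η hξη hη
    simp only [dif_pos hη, dif_pos (hξη.trans hη)]
    exact (Ordinal.enum_lt_enum (α := S) (r := (· < ·))).2 hξη

theorem exists_cofinal (C : Set X) :
    ∃ S ⊆ C, S.IsWF ∧ (∀ x ∈ C, ∃ s ∈ S, x ≤ s) ∧ ∃ κ : Cardinal.{v},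
      (∀ s ∈ S, #(S ∩ Iio s : Set X) < κ) ∧
      ∀ T ⊆ S, #T < κ → ∃ d ∈ S, ∀ e ∈ T, e < d := by
  obtain ⟨s, hs, hcard⟩ := Order.exists_cof_eq C
  obtain ⟨r, hr, hr'⟩ := exists_ord_eq s
  let S : Set X := {x | ∃ a : s, (∀ b : s, r b a → b < a) ∧ a.1.1 = x}
  have hSr : ∀ a b : s, (∀ c : s, r c b → c < b) → (∀ c : s, r c a → c < a) →
      a.1.1 < b.1.1 → r a b := by
    intro a b hb ha hab
    rcases trichotomous_of r a b with h | h | h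
    · exact h
    · exact absurd (congrArg (fun t : s => t.1.1) h) hab.ne
    · exact absurd (ha b h) (not_lt.2 (le_of_lt hab))
  have hScof : ∀ x ∈ C, ∃ t ∈ S, x ≤ t := by
    intro x hx
    obtain ⟨y, hy, hxy⟩ := hs ⟨x, hx⟩
    obtain ⟨z, hz, hyz⟩ := isCofinal_setOfPred_imp_lt r ⟨y, hy⟩
    exact ⟨z.1.1, ⟨z, hz, rfl⟩, le_trans (show x ≤ y.1 from hxy) hyz⟩
  refine ⟨S, ?_, ?_, hScof, #s, ?_, ?_⟩
  · rintro _ ⟨a, -, rfl⟩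
    exact a.1.2
  · refine Subrelation.wf (r := InvImage r fun x : S => x.2.choose) ?_ (InvImage.wf _ hr.wf)
    intro x y hxy
    refine hSr _ _ y.2.choose_spec.1 x.2.choose_spec.1 ?_
    rw [x.2.choose_spec.2, y.2.choose_spec.2]
    exact hxy
  · rintro _ ⟨a, ha, rfl⟩
    refine lt_of_le_of_lt ?_ (card_typein_lt a hr')
    refine mk_le_of_injective (β := {b // r b a})
      (f := fun x => ⟨x.2.1.choose, hSr _ _ ha x.2.1.choose_spec.1 ?_⟩) ?_
    · rw [x.2.1.choose_spec.2]
      exact x.2.2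
    · intro x y hxy
      have h1 : x.2.1.choose = y.2.1.choose := congrArg Subtype.val hxy
      have h2 := x.2.1.choose_spec.2
      rw [h1, y.2.1.choose_spec.2] at h2
      exact Subtype.ext h2.symm
  · intro T hT hlt
    let T' : Set C := Subtype.val ⁻¹' T
    have hT' : #T' ≤ #T := mk_preimage_of_injective _ _ Subtype.val_injective
    have hnc : ¬ IsCofinal T' := fun h =>
      absurd (Order.cof_le h) (not_le.2 (hT'.trans_lt (hlt.trans_eq hcard)))
    simp only [IsCofinal, not_forall, not_exists, not_and, not_le] at hnc
    obtain ⟨x, hx⟩ := hnc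
    obtain ⟨d, hd, hxd⟩ := hScof x x.2
    refine ⟨d, hd, fun e he => lt_of_lt_of_le ?_ hxd⟩
    obtain ⟨a, -, rfl⟩ := hT he
    exact hx a.1 he

/-- A map to the least upper bound within a cofinal well-ordered set. -/
theorem exists_ceil {C S : Set X} (hS : S.IsWF) (hcof : ∀ x ∈ C, ∃ s ∈ S, x ≤ s) :
    ∃ r : X → X, (∀ x ∈ C, r x ∈ S ∧ x ≤ r x ∧ ∀ s ∈ S, x ≤ s → r x ≤ s) := by
  have : ∀ x, ∃ y, x ∈ C → y ∈ S ∧ x ≤ y ∧ ∀ s ∈ S, x ≤ s → y ≤ s := by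
    intro x
    by_cases hx : x ∈ C
    · have hw : (S ∩ Ici x).IsWF := hS.mono inter_subset_left
      have hne : (S ∩ Ici x).Nonempty := let ⟨s, hs, hxs⟩ := hcof x hx; ⟨s, hs, hxs⟩
      exact ⟨hw.min hne, fun _ => ⟨(hw.min_mem hne).1, (hw.min_mem hne).2,
        fun s hs hxs => hw.min_le hne ⟨hs, hxs⟩⟩⟩
    · exact ⟨x, fun h => absurd h hx⟩
  choose r hr using this
  exact ⟨r, hr⟩

end Compare

/-- Inside each member of the family, one can choose increasing members indexed by `T`, except that
points outside `S` need not be separated. -/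
def CanSpread {X Y : Type v} [LT X] [LT Y] (𝓑 : Set (Set Y)) (S T : Set X) : Prop :=
  ∀ I ∈ 𝓑, ∃ h : X → Set Y, (∀ d ∈ T, h d ∈ 𝓑 ∧ h d ⊆ I) ∧
    ∀ d ∈ T, ∀ e ∈ T, d < e → SLt (h d) (h e) ∨ (h d = h e ∧ d ∉ S ∧ e ∉ S)

section Spread

variable {X Y : Type v} [LinearOrder X] [LinearOrder Y]

theorem CanSpread.dual {𝓑 : Set (Set Y)} {S T : Set X} (h : CanSpread 𝓑 S T) :
    CanSpread (dualFamily 𝓑) (dualSet S) (dualSet T) := by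
  intro I hI
  obtain ⟨g, hg, hg'⟩ := h _ hI
  refine ⟨fun d => dualSet (g (OrderDual.ofDual d)), fun d hd => hg d hd,
    fun d hd e he hde => ?_⟩
  rcases hg' e he d hd hde with h | h
  · exact Or.inl h.dual
  · refine Or.inr ⟨?_, h.2.2, h.2.1⟩
    simp only [show g (OrderDual.ofDual d) = g (OrderDual.ofDual e) from h.1.symm]

theorem CanSpread.of_dual {𝓑 : Set (Set Y)} {S T : Set X}
    (h : CanSpread (dualFamily 𝓑) (dualSet S) (dualSet T)) : CanSpread 𝓑 S T :=
  h.dual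

theorem CanSpread.mono {𝓑 : Set (Set Y)} {S T T' : Set X} (h : CanSpread 𝓑 S T)
    (hT : T' ⊆ T) : CanSpread 𝓑 S T' := by
  intro I hI
  obtain ⟨g, hg, hg'⟩ := h I hI
  exact ⟨g, fun d hd => hg d (hT hd), fun d hd e he => hg' d (hT hd) e (hT he)⟩

theorem CanSpread.of_forall_Iic {𝓑 : Set (Set Y)} {S D T : Set X} {a : Ordinal.{v}}
    (h𝓑 : UpBase 𝓑 a) (ha : ∀ μ, OrdEmb μ D → μ < a)
    (hT : ∀ y ∈ T, CanSpread 𝓑 S (T ∩ Iic y ∩ D)) : CanSpread 𝓑 S (T ∩ D) := by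
  intro I hI
  rcases (T ∩ D).eq_empty_or_nonempty with he | hne
  · exact ⟨fun _ => I, by simp [he], by simp [he]⟩
  obtain ⟨S₀, hS₀, hwf, hcof, -⟩ := exists_cofinal (T ∩ D)
  have hne₀ : S₀.Nonempty := let ⟨x, hx⟩ := hne; let ⟨s, hs, _⟩ := hcof x hx; ⟨s, hs⟩
  obtain ⟨μ, τ, hτ, hτ', hμ⟩ := exists_ordEmb_of_isWF hwf hne₀
  obtain ⟨J, hJ⟩ := h𝓑 I hI μ (ha μ (hμ.mono fun s hs => (hS₀ hs).2))
  obtain ⟨r, hr⟩ := exists_ceil hwf hcof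
  have key : ∀ s, ∃ h : X → Set Y, s ∈ S₀ →
      (∀ d ∈ T ∩ Iic s ∩ D, h d ∈ 𝓑 ∧ h d ⊆ J (τ s)) ∧
      ∀ d ∈ T ∩ Iic s ∩ D, ∀ e ∈ T ∩ Iic s ∩ D, d < e →
        SLt (h d) (h e) ∨ (h d = h e ∧ d ∉ S ∧ e ∉ S) := by
    intro s
    by_cases hs : s ∈ S₀
    · obtain ⟨h, hh⟩ := hT s (hS₀ hs).1 (J (τ s)) (hJ _ (hτ s hs)).1
      exact ⟨h, fun _ => hh⟩
    · exact ⟨fun _ => ∅, fun h => absurd h hs⟩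
  choose h hh using key
  have hmem : ∀ d ∈ T ∩ D, h (r d) d ∈ 𝓑 ∧ h (r d) d ⊆ J (τ (r d)) := fun d hd =>
    (hh (r d) (hr d hd).1).1 d ⟨⟨hd.1, (hr d hd).2.1⟩, hd.2⟩
  refine ⟨fun d => h (r d) d, fun d hd => ⟨(hmem d hd).1, (hmem d hd).2.trans
    (hJ _ (hτ _ (hr d hd).1)).2.1⟩, fun d hd e he hde => ?_⟩
  have hle : r d ≤ r e := (hr d hd).2.2 _ (hr e he).1 (hde.le.trans (hr e he).2.1)
  rcases hle.lt_or_eq with hlt | heq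
  · exact Or.inl (((hJ _ (hτ _ (hr e he).1)).2.2 _ (hτ' (hr d hd).1 (hr e he).1 hlt)).mono
      (hmem d hd).2 (hmem e he).2)
  · simp only [heq]
    exact (hh (r e) (hr e he).1).2 d ⟨⟨hd.1, hde.le.trans (hr e he).2.1⟩, hd.2⟩ e
      ⟨⟨he.1, (hr e he).2.1⟩, he.2⟩ hde

theorem canSpread_of_qFree {𝓑 : Set (Set Y)} {S D : Set X} {a b : Ordinal.{v}}
    (hup : UpBase 𝓑 a) (hdown : UpBase (dualFamily 𝓑) b) (ha : ∀ μ, OrdEmb μ D → μ < a)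
    (hb : ∀ μ, OrdEmb μ (dualSet D) → μ < b) (hS : QFree S) : CanSpread 𝓑 S D := by
  classical
  by_contra hcon
  refine (?_ : ¬ ∃ R ⊆ S, R.Nontrivial ∧ (∀ x ∈ R, ∀ y ∈ R, x < y → ∃ z ∈ R, x < z ∧ z < y) ∧
      (∀ x ∈ R, ∀ y ∈ R, x < y → ¬ CanSpread 𝓑 S (Icc x y ∩ D)) ∧
      ∀ s ∈ S, ∃ r ∈ R, CanSpread 𝓑 S (uIcc s r ∩ D))
    (exists_dense_of_not (P := fun C => CanSpread 𝓑 S (C ∩ D))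
    (S := S) (fun C C' hCC' h => h.mono (inter_subset_inter_left _ hCC')) ?_ ?_ ?_ ?_ ?_
    (by simpa using hcon))
  · rintro ⟨R, hRS, hR, hd, -, -⟩
    exact not_qFree_of_dense hR hd (hS.mono hRS)
  · intro C hC I hI
    exact ⟨fun _ => I, fun d _ => ⟨hI, subset_rfl⟩, fun d hd e he _ =>
      Or.inr ⟨rfl, disjoint_left.1 hC hd.1, disjoint_left.1 hC he.1⟩⟩
  · intro x I hI
    refine ⟨fun _ => I, fun d _ => ⟨hI, subset_rfl⟩, ?_⟩
    rintro d ⟨rfl, -⟩ e ⟨rfl, -⟩ h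
    exact absurd h (lt_irrefl _)
  · intro A B hAB hA hB I hI
    rw [union_inter_distrib_right]
    rcases (A ∩ D).eq_empty_or_nonempty with he | ⟨x, hxA, hxD⟩
    · rw [he, empty_union]
      exact hB I hI
    rcases (B ∩ D).eq_empty_or_nonempty with he | ⟨y, hyB, hyD⟩
    · rw [he, union_empty]
      exact hA I hI
    have h2 : (2 : Ordinal.{v}) < a := by
      refine ha 2 ⟨fun ξ => if ξ = 0 then x else y, fun ξ _ => ?_, fun ξ η hξη hη => ?_⟩
      · by_cases h : ξ = 0 <;> simp [h, hxD, hyD]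
      · have hη0 : η ≠ 0 := (zero_le.trans_lt hξη).ne'
        have hη1 : η ≤ 1 := Order.lt_succ_iff.1 (by
          rw [Order.succ_eq_add_one, one_add_one_eq_two]; exact hη)
        have hξ0 : ξ = 0 := Order.lt_one_iff.1 (hξη.trans_le hη1)
        simpa [hη0, hξ0] using hAB x hxA y hyB
    obtain ⟨J, hJ⟩ := hup I hI 2 h2
    have hJ0 := hJ 0 (by norm_num)
    have hJ1 := hJ 1 (by norm_num)
    obtain ⟨f, hf, hf'⟩ := hA _ hJ0.1
    obtain ⟨g, hg, hg'⟩ := hB _ hJ1.1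
    have h01 := hJ1.2.2 0 zero_lt_one
    have hBA : ∀ x ∈ B, x ∉ A := fun x hx hxA => lt_irrefl _ (hAB x hxA x hx)
    refine ⟨fun x => if x ∈ A then f x else g x, ?_, ?_⟩
    · rintro d (hd | hd)
      · simpa [hd.1] using ⟨(hf d hd).1, (hf d hd).2.trans hJ0.2.1⟩
      · simpa [hBA d hd.1] using ⟨(hg d hd).1, (hg d hd).2.trans hJ1.2.1⟩
    · rintro d (hd | hd) e (he | he) hde
      · simpa [hd.1, he.1] using hf' d hd e he hde
      · left
        simpa [hd.1, hBA e he.1] using h01.mono (hf d hd).2 (hg e he).2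
      · exact absurd (hAB e he.1 d hd.1) (not_lt.2 hde.le)
      · simpa [hBA d hd.1, hBA e he.1] using hg' d hd e he hde
  · exact fun T hT => .of_forall_Iic hup ha hT
  · intro T hT
    refine CanSpread.of_dual ?_
    exact CanSpread.of_forall_Iic (T := dualSet T) (D := dualSet D) (S := dualSet S) hdown hb
      fun y hy => (hT y hy).dual

theorem emb_of_base {C : Set X} {r : X → X} {S : ℕ → Set X} {𝓑 : Set (Set Y)}
    {a b : Ordinal.{v}} (hC : C.Nonempty) (hr : MonotoneOn r C) (hcover : r '' C ⊆ ⋃ n, S n)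
    (hS : ∀ n, QFree (S n)) (ha : ∀ μ, OrdEmb μ (r '' C) → μ < a)
    (hb : ∀ μ, OrdEmb μ (dualSet (r '' C)) → μ < b) (hup : UpBase 𝓑 a)
    (hdown : UpBase (dualFamily 𝓑) b) {I : Set Y} (hI : I ∈ 𝓑)
    (hf : ∀ I ∈ 𝓑, ∀ d ∈ r '' C, Emb (fib C r d) I) : Emb C I := by
  have hsp : ∀ n, CanSpread 𝓑 (S n) (r '' C) := fun n =>
    canSpread_of_qFree hup hdown ha hb (hS n)
  choose! g hg hg' using hsp
  let H : ℕ → X → Set Y := fun n => Nat.rec (fun _ => I) (fun n h d => g n (h d) d) n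
  have hH : ∀ n d, H (n + 1) d = g n (H n d) d := fun _ _ => rfl
  have hmem : ∀ n, ∀ d ∈ r '' C, H n d ∈ 𝓑 := by
    intro n
    induction n with
    | zero => exact fun _ _ => hI
    | succ n ih => exact fun d hd => (hg n _ (ih d hd) d hd).1
  have hanti : ∀ d ∈ r '' C, Antitone fun n => H n d := fun d hd =>
    antitone_nat_of_succ_le fun n => (hg n _ (hmem n d hd) d hd).2
  have hsep : ∀ n, ∀ d ∈ r '' C, ∀ e ∈ r '' C, d < e → SLt (H n d) (H n e) ∨
      (H n d = H n e ∧ ∀ k < n, d ∉ S k ∧ e ∉ S k) := by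
    intro n d hd e he hde
    induction n with
    | zero => exact Or.inr ⟨rfl, by simp⟩
    | succ n ih =>
      rcases ih with h | ⟨h, hk⟩
      · exact Or.inl (h.mono (hanti d hd n.le_succ) (hanti e he n.le_succ))
      · have := hg' n _ (hmem n d hd) d hd e he hde
        rw [hH, hH, ← h]
        refine this.imp_right fun h' => ⟨h'.1, fun k hkn => ?_⟩
        rcases Nat.lt_succ_iff_lt_or_eq.1 hkn with hk' | rfl
        · exact hk k hk'
        · exact h'.2
  have hN : ∀ d, ∃ n, d ∈ r '' C → d ∈ S n := by
    intro d
    by_cases hd : d ∈ r '' C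
    · obtain ⟨n, hn⟩ := mem_iUnion.1 (hcover hd)
      exact ⟨n, fun _ => hn⟩
    · exact ⟨0, fun h => absurd h hd⟩
  choose N hN using hN
  refine Emb.glue (T := fun d => H (N d + 1) d) hC hr (fun d hd => hf _ (hmem (N d + 1) d hd) d hd)
    (fun d hd => hanti d hd (Nat.zero_le (N d + 1))) fun d hd e he hde => ?_
  rcases le_total (N d) (N e) with hle | hle
  · rcases hsep (N d + 1) d hd e he hde with h | h
    · exact h.mono subset_rfl (hanti e he (Nat.succ_le_succ hle))
    · exact absurd (hN d hd) (h.2 _ (Nat.lt_succ_self _)).1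
  · rcases hsep (N e + 1) d hd e he hde with h | h
    · exact h.mono (hanti d hd (Nat.succ_le_succ hle)) subset_rfl
    · exact absurd (hN e he) (h.2 _ (Nat.lt_succ_self _)).2

theorem IsShuf.emb {C : Set X} {r : X → X} {a b : Ordinal.{v}} {C' : Set Y} {r' : Y → Y}
    {a' b' : Ordinal.{v}} (h : IsShuf C r a b) (h' : IsShuf C' r' a' b') (hC : C.Nonempty)
    (ha : a ≤ a') (hb : b ≤ b')
    (hf : ∀ d ∈ r '' C, ∃ e ∈ r' '' C', Emb (fib C r d) (fib C' r' e)) : Emb C C' := by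
  obtain ⟨S, hcover, hS⟩ := h.cover
  obtain ⟨𝓑, ⟨I, hI⟩, hup, hdown, h𝓑⟩ := h'.base
  refine Emb.trans (emb_of_base hC h.mono hcover hS (fun μ hμ => (h.ordEmb_lt μ hμ).trans_le ha)
    (fun μ hμ => (h.ordEmb_dual_lt μ hμ).trans_le hb) hup hdown hI fun I hI d hd => ?_)
    (Emb.of_subset (h𝓑 I hI).1)
  obtain ⟨e, he, hde⟩ := hf d hd
  exact hde.trans ((h𝓑 I hI).2 e he)

end Spread

/-- One step in the construction of a linear order from simpler ones: `Step k a b 𝓕 C` expresses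
that `C` is built by the operation number `k` with parameters `a` and `b` from the members of
`𝓕 false` and `𝓕 true`. -/
inductive Step {X : Type v} [LinearOrder X] :
    ℕ → Ordinal.{v} → Ordinal.{v} → (Bool → Set (Set X)) → Set X → Prop
  | one (x : X) : Step 0 0 0 (fun _ => ∅) {x}
  | add (A B : Set X) (h : SLt A B) : Step 1 0 0 (fun i => {bif i then B else A}) (A ∪ B)
  | up (C : Set X) (r : X → X) (κ : Cardinal.{v}) (hC : C.Nonempty) (h : IsUp C r κ) :
      Step 2 κ.ord 0 (fun _ => fib C r '' (r '' C)) C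
  | down (C : Set X) (r : Xᵒᵈ → Xᵒᵈ) (κ : Cardinal.{v}) (hC : C.Nonempty)
      (h : IsUp (dualSet C) r κ) :
      Step 3 κ.ord 0
        (fun _ => (fun d => OrderDual.toDual ⁻¹' fib (dualSet C) r d) '' (r '' dualSet C)) C
  | shuf (C : Set X) (r : X → X) (a b : Ordinal.{v}) (hC : C.Nonempty) (h : IsShuf C r a b) :
      Step 4 a b (fun _ => fib C r '' (r '' C)) C

/-- The suborders constructed from singletons by transfinite iteration of `Step`. -/
inductive Ind {X : Type v} [LinearOrder X] : Ordinal.{v} → Set X → Prop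
  | mk (α : Ordinal.{v}) (C : Set X) (k : ℕ) (a b : Ordinal.{v}) (𝓕 : Bool → Set (Set X))
      (β : Set X → Ordinal.{v}) (hstep : Step k a b 𝓕 C) (hβ : ∀ i, ∀ F ∈ 𝓕 i, β F < α)
      (h : ∀ i, ∀ F ∈ 𝓕 i, Ind (β F) F) : Ind α C

theorem Step.emb {X Y : Type v} [LinearOrder X] [LinearOrder Y] {k : ℕ} {a b a' b' : Ordinal.{v}}
    {𝓕 : Bool → Set (Set X)} {𝓕' : Bool → Set (Set Y)} {C : Set X} {C' : Set Y}
    (h : Step k a b 𝓕 C) (h' : Step k a' b' 𝓕' C') (ha : a ≤ a') (hb : b ≤ b')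
    (hf : ∀ i, ∀ F ∈ 𝓕 i, ∃ F' ∈ 𝓕' i, Emb F F') : Emb C C' := by
  cases h with
  | one x =>
    cases h' with
    | one y => exact ⟨fun _ => y, fun _ _ => rfl, fun s hs t ht hst => by
        rw [hs, ht] at hst; exact absurd hst (lt_irrefl _)⟩
  | add A B h =>
    cases h' with
    | add A' B' h' =>
      refine Emb.union h h' ?_ ?_
      · simpa using hf false
      · simpa using hf true
  | up C r κ hC h =>
    cases h' with
    | up C' r' κ' hC' h' =>
      refine h.emb h' hC (ord_le_ord.1 ha) fun d hd => ?_
      simpa using hf true _ (mem_image_of_mem _ hd)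
  | down C r κ hC h =>
    cases h' with
    | down C' r' κ' hC' h' =>
      refine Emb.of_dual (h.emb h' hC (ord_le_ord.1 ha) fun d hd => ?_)
      obtain ⟨_, ⟨e, he, rfl⟩, hde⟩ := hf true _ (mem_image_of_mem _ hd)
      exact ⟨e, he, hde.dual⟩
  | shuf C r a b hC h =>
    cases h' with
    | shuf C' r' a' b' hC' h' =>
      refine h.emb h' hC ha hb fun d hd => ?_
      simpa using hf true _ (mem_image_of_mem _ hd)

theorem Step.subset {X : Type v} [LinearOrder X] {k : ℕ} {a b : Ordinal.{v}}
    {𝓕 : Bool → Set (Set X)} {C : Set X} (h : Step k a b 𝓕 C) :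
    k ≤ 4 ∧ ∀ i, ∀ F ∈ 𝓕 i, F ⊆ C := by
  cases h with
  | one x => simp
  | add A B h => simp
  | up C r κ hC h =>
    refine ⟨by omega, fun _ => ?_⟩
    rintro _ ⟨d, -, rfl⟩
    exact fib_subset _ _ _
  | down C r κ hC h =>
    refine ⟨by omega, fun _ => ?_⟩
    rintro _ ⟨d, -, rfl⟩
    exact fun x hx => fib_subset _ _ _ hx
  | shuf C r a b hC h =>
    refine ⟨by omega, fun _ => ?_⟩
    rintro _ ⟨d, -, rfl⟩
    exact fib_subset _ _ _

/-- A suborder together with a rank of its construction. -/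
structure Built : Type (v + 1) where
  /-- the ambient order -/
  carrier : Type v
  [order : LinearOrder carrier]
  /-- the suborder -/
  set : Set carrier
  /-- the rank -/
  rank : Ordinal.{v}
  ind : Ind rank set

attribute [instance] Built.order

/-- The suborders constructed from singletons are well-quasi-ordered by embeddability. -/
theorem Built.exists_emb (u : ℕ → Built.{v}) : ∃ i j, i < j ∧ Emb (u i).set (u j).set := by
  have hdec : ∀ p : Built.{v}, ∃ (k : ℕ) (a b : Ordinal.{v}) (𝓕 : Bool → Set (Set p.carrier)),
      Step k a b 𝓕 p.set ∧ ∀ i, ∀ F ∈ 𝓕 i, ∃ β < p.rank, Ind β F := by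
    rintro ⟨X, C, α, h⟩
    obtain ⟨_, _, k, a, b, 𝓕, β, hstep, hβ, h⟩ := h
    exact ⟨k, a, b, 𝓕, hstep, fun i F hF => ⟨β F, hβ i F hF, h i F hF⟩⟩
  choose k a b 𝓕 hstep h𝓕 using hdec
  refine exists_le_of_children (le := fun p q : Built.{v} => Emb p.set q.set)
    (ρ := Built.rank) (fun _ _ _ => Emb.trans) [fun p => (k p : Ordinal.{v}), fun p => ((4 - k p : ℕ) : Ordinal.{v}), a, b]
    (fun i p => {p' | ∃ F ∈ 𝓕 p i, ∃ β, ∃ _ : β < p.rank, ∃ h : Ind β F,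
      p' = Built.mk p.carrier F β h}) ?_ ?_ u
  · rintro i p _ ⟨F, hF, β, hβ, h, rfl⟩
    exact ⟨hβ, Emb.of_subset ((hstep p).subset.2 i F hF)⟩
  · intro p q hpq hL
    by_contra! hno
    simp only [List.mem_cons, forall_eq_or_imp, List.not_mem_nil, false_imp_iff, forall_true_iff,
      and_true, Nat.cast_le] at hL
    obtain ⟨h1, h2, h3, h4⟩ := hL
    have hk : k q = k p := by
      have := (hstep p).subset.1
      have := (hstep q).subset.1
      omega
    refine hpq (Step.emb (hstep p) (hk ▸ hstep q) h3 h4 fun i F hF => ?_)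
    obtain ⟨β, hβ, h⟩ := h𝓕 p i F hF
    obtain ⟨_, ⟨F', hF', _, _, _, rfl⟩, hle⟩ := hno i _ ⟨F, hF, β, hβ, h, rfl⟩
    exact ⟨F', hF', hle⟩

theorem Ind.exists_emb {X : ℕ → Type v} [∀ n, LinearOrder (X n)] (C : ∀ n, Set (X n))
    (h : ∀ n, ∃ α, Ind α (C n)) : ∃ i j, i < j ∧ Emb (C i) (C j) := by
  choose α hα using h
  exact Built.exists_emb fun n => ⟨X n, C n, α n, hα n⟩

section Tail

variable {X : Type v} [LinearOrder X]

theorem ordConnected_fib {C : Set X} {r : X → X} (hC : C.OrdConnected) (hr : MonotoneOn r C)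
    (d : X) : (fib C r d).OrdConnected := by
  refine ⟨fun x hx y hy z hz => ?_⟩
  have hzC : z ∈ C := hC.out hx.1 hy.1 hz
  exact ⟨hzC, le_antisymm ((hr hzC hy.1 hz.2).trans_eq hy.2)
    (hx.2.symm.trans_le (hr hx.1 hzC hz.1))⟩

/-- If the bounded convex parts of a convex set `C` are well-quasi-ordered by embeddability, then
a final segment of `C` is a sum over a regular cardinal whose summands recur cofinally. -/
theorem exists_isUp_tail {G : Set X → Prop} {C : Set X} (hne : C.Nonempty) (hC : C.OrdConnected)
    (hG : ∀ y ∈ C, ∀ T ⊆ C ∩ Iic y, T.Nonempty → T.OrdConnected → G T)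
    (hwqo : ∀ F : ℕ → Set X, (∀ n, G (F n)) → ∃ i j, i < j ∧ Emb (F i) (F j)) :
    ∃ A B r κ, C = A ∪ B ∧ SLt A B ∧ (A.Nonempty → G A) ∧ B.Nonempty ∧ IsUp B r κ ∧
      ∀ d ∈ r '' B, G (fib B r d) := by
  obtain ⟨S, hSC, hwf, hcof, κ, hκ, hκ'⟩ := exists_cofinal C
  obtain ⟨r, hr⟩ := exists_ceil hwf hcof
  have hmono : MonotoneOn r C := fun x hx y hy hxy =>
    (hr x hx).2.2 _ (hr y hy).1 (hxy.trans (hr y hy).2.1)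
  have hrS : ∀ s ∈ S, r s = s := fun s hs =>
    le_antisymm ((hr s (hSC hs)).2.2 s hs le_rfl) (hr s (hSC hs)).2.1
  have hfib : ∀ s ∈ S, G (fib C r s) := fun s hs =>
    hG s (hSC hs) _ (fun x hx => ⟨hx.1, (hr x hx.1).2.1.trans_eq hx.2⟩)
      ⟨s, hSC hs, hrS s hs⟩ (ordConnected_fib hC hmono s)
  obtain ⟨c, hc⟩ : ∃ c ∈ S, ∀ d ∈ S, c ≤ d → ∀ e ∈ S, c ≤ e →
      ∃ d' ∈ S, e ≤ d' ∧ Emb (fib C r d) (fib C r d') := by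
    by_contra! hno
    have : ∀ c : S, ∃ d e : S, c ≤ d ∧ c ≤ e ∧ ∀ d' : S, e ≤ d' →
        ¬ Emb (fib C r d) (fib C r d') := by
      intro c
      obtain ⟨d, hd, hcd, e, he, hce, h⟩ := hno c c.2
      exact ⟨⟨d, hd⟩, ⟨e, he⟩, hcd, hce, fun d' hd' => h d' d'.2 hd'⟩
    choose d e hd he h using this
    obtain ⟨x, hx⟩ := hne
    let c : ℕ → S := fun n => Nat.rec ⟨r x, (hr x hx).1⟩ (fun _ c => e c) n
    have hmc : Monotone c := monotone_nat_of_le_succ fun n => he (c n)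
    obtain ⟨i, j, hij, hemb⟩ := hwqo (fun n => fib C r (d (c n))) fun n => hfib _ (d (c n)).2
    exact h (c i) (d (c j)) ((hmc (Nat.succ_le_of_lt hij)).trans (hd (c j))) hemb
  obtain ⟨hcS, hc⟩ := hc
  have himage : r '' {x ∈ C | c ≤ r x} = S ∩ Ici c := by
    ext d
    constructor
    · rintro ⟨x, hx, rfl⟩
      exact ⟨(hr x hx.1).1, hx.2⟩
    · rintro ⟨hd, hcd⟩
      exact ⟨d, ⟨hSC hd, by rwa [hrS d hd]⟩, hrS d hd⟩
  have hfibeq : ∀ d, c ≤ d → fib {x ∈ C | c ≤ r x} r d = fib C r d := by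
    intro d hd
    ext x
    exact ⟨fun hx => ⟨hx.1.1, hx.2⟩, fun hx => ⟨⟨hx.1, hx.2.symm ▸ hd⟩, hx.2⟩⟩
  refine ⟨{x ∈ C | r x < c}, {x ∈ C | c ≤ r x}, r, κ, ?_, ?_, ?_, ?_, ⟨?_, ?_, ?_, ?_, ?_⟩, ?_⟩
  · ext x
    constructor
    · intro hx
      exact (lt_or_ge (r x) c).imp (⟨hx, ·⟩) (⟨hx, ·⟩)
    · rintro (hx | hx) <;> exact hx.1
  · intro x hx y hy
    by_contra! hyx
    exact absurd (hmono hy.1 hx.1 hyx) (not_le.2 (hx.2.trans_le hy.2))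
  · intro hA
    refine hG c (hSC hcS) _ (fun x hx => ⟨hx.1, (hr x hx.1).2.1.trans hx.2.le⟩) hA
      ⟨fun x hx y hy z hz => ?_⟩
    have hzC := hC.out hx.1 hy.1 hz
    exact ⟨hzC, (hmono hzC hy.1 hz.2).trans_lt hy.2⟩
  · exact ⟨c, hSC hcS, (hrS c hcS).ge⟩
  · exact hmono.mono fun x hx => hx.1
  · rw [himage]
    exact hwf.mono inter_subset_left
  · rw [himage]
    exact fun d hd => (mk_le_mk_of_subset (by gcongr; exact inter_subset_left)).trans_lt (hκ d hd.1)
  · rw [himage]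
    intro s hs hlt
    rcases s.eq_empty_or_nonempty with rfl | ⟨e, he⟩
    · exact ⟨c, ⟨hcS, le_rfl⟩, by simp⟩
    · obtain ⟨d, hd, h⟩ := hκ' s (hs.trans inter_subset_left) hlt
      exact ⟨d, ⟨hd, (hs he).2.trans (h e he).le⟩, h⟩
  · rw [himage]
    rintro d ⟨hd, hcd⟩ e ⟨he, hce⟩
    obtain ⟨d', hd', hed', h⟩ := hc d hd hcd e he hce
    refine ⟨d', ⟨hd', hce.trans hed'⟩, hed', ?_⟩
    rwa [hfibeq d hcd, hfibeq d' (hce.trans hed')]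
  · rw [himage]
    rintro d ⟨hd, hcd⟩
    rw [hfibeq d hcd]
    exact hfib d hd

theorem Step.ind {k : ℕ} {a b : Ordinal.{v}} {𝓕 : Bool → Set (Set X)} {C : Set X}
    (h : Step k a b 𝓕 C) (hF : ∀ i, ∀ F ∈ 𝓕 i, ∃ α, Ind α F) : ∃ α, Ind α C := by
  have : ∀ F : Set X, ∃ α, ∀ i, F ∈ 𝓕 i → Ind α F := by
    intro F
    by_cases hi : ∃ i, F ∈ 𝓕 i
    · obtain ⟨i, hi⟩ := hi
      obtain ⟨α, hα⟩ := hF i F hi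
      exact ⟨α, fun _ _ => hα⟩
    · exact ⟨0, fun i h => absurd ⟨i, h⟩ hi⟩
  choose β hβ using this
  exact ⟨Order.succ (⨆ F, β F), .mk _ C k a b 𝓕 β h
    (fun _ F _ => Order.lt_succ_of_le (Ordinal.le_iSup β F)) fun i F h => hβ F i h⟩

theorem exists_ind_union {A B : Set X} (h : SLt A B) (hne : (A ∪ B).Nonempty)
    (hA : A.Nonempty → ∃ α, Ind α A) (hB : B.Nonempty → ∃ α, Ind α B) :
    ∃ α, Ind α (A ∪ B) := by
  rcases A.eq_empty_or_nonempty with rfl | hA'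
  · rw [empty_union] at hne ⊢
    exact hB hne
  rcases B.eq_empty_or_nonempty with rfl | hB'
  · rw [union_empty]
    exact hA hA'
  · exact (Step.add A B h).ind fun i => by cases i <;> simpa using by tauto

/-- Every nonempty convex part of `C` can be constructed from singletons. -/
def HInd (C : Set X) : Prop :=
  ∀ D ⊆ C, D.Nonempty → D.OrdConnected → ∃ α, Ind α D

theorem HInd.mono {C C' : Set X} (h : HInd C') (hC : C ⊆ C') : HInd C :=
  fun D hD => h D (hD.trans hC)

theorem HInd.of_subset_singleton {C : Set X} {x : X} (hC : C ⊆ {x}) : HInd C := by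
  intro D hD hne _
  rw [hne.subset_singleton_iff.1 (hD.trans hC)]
  exact (Step.one x).ind (by simp)

theorem HInd.union {A B : Set X} (h : SLt A B) (hA : HInd A) (hB : HInd B) : HInd (A ∪ B) := by
  intro D hD hne hconn
  rw [← inter_eq_left.2 hD, inter_union_distrib_left]
  refine exists_ind_union (h.mono inter_subset_right inter_subset_right)
    (by rwa [← inter_union_distrib_left, inter_eq_left.2 hD])
    (fun hne => hA _ inter_subset_right hne ⟨fun x hx y hy z hz => ?_⟩)
    (fun hne => hB _ inter_subset_right hne ⟨fun x hx y hy z hz => ?_⟩)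
  · have hzD := hconn.out hx.1 hy.1 hz
    exact ⟨hzD, (hD hzD).resolve_right fun hzB => absurd (h y hy.2 z hzB) (not_lt.2 hz.2)⟩
  · have hzD := hconn.out hx.1 hy.1 hz
    exact ⟨hzD, (hD hzD).resolve_left fun hzA => absurd (h z hzA x hx.2) (not_lt.2 hz.1)⟩

theorem HInd.of_forall_Iic {C : Set X} (h : ∀ y ∈ C, HInd (C ∩ Iic y)) : HInd C := by
  intro D hD hne hconn
  obtain ⟨A, B, r, κ, rfl, hAB, hA, hB, hup, hG⟩ :=
    exists_isUp_tail (G := fun T => ∃ α, Ind α T) hne hconn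
    (fun y hy T hT => h y (hD hy) T fun x hx => ⟨hD (hT hx).1, (hT hx).2⟩)
    fun F hF => Ind.exists_emb F hF
  refine exists_ind_union hAB hne hA fun _ => (Step.up B r κ hB hup).ind fun _ => ?_
  rintro _ ⟨d, hd, rfl⟩
  exact hG d hd

theorem HInd.of_forall_Ici {C : Set X} (h : ∀ y ∈ C, HInd (C ∩ Ici y)) : HInd C := by
  intro D hD hne hconn
  obtain ⟨A, B, r, κ, hDAB, hAB, hA, hB, hup, hG⟩ :=
    exists_isUp_tail (X := Xᵒᵈ) (C := dualSet D) (G := fun T => ∃ α, Ind α (OrderDual.toDual ⁻¹' T))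
    hne hconn.dual
    (fun y hy T hT hne hT' => h y (hD hy) _ (fun x hx => ⟨hD (hT hx).1, (hT hx).2⟩) hne hT'.dual)
    fun F hF => by
      obtain ⟨i, j, hij, h⟩ := Ind.exists_emb (fun n => OrderDual.toDual ⁻¹' F n) hF
      exact ⟨i, j, hij, h.dual⟩
  obtain rfl : D = (OrderDual.toDual ⁻¹' B) ∪ (OrderDual.toDual ⁻¹' A) := by
    rw [union_comm]
    exact hDAB
  refine exists_ind_union (fun b hb a ha => hAB a ha b hb) hne
    (fun _ => (Step.down (OrderDual.toDual ⁻¹' B) r κ hB hup).ind fun _ => ?_) hA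
  rintro _ ⟨d, hd, rfl⟩
  exact hG d hd

/-- The least ordinal not embeddable into `R`. -/
noncomputable def ordBound (R : Set X) : Ordinal.{v} := sInf {μ | ¬ OrdEmb μ R}

theorem lt_ordBound_iff {R : Set X} {μ : Ordinal.{v}} : μ < ordBound R ↔ OrdEmb μ R := by
  constructor
  · intro h
    by_contra hμ
    exact notMem_of_lt_csInf' h hμ
  · intro h
    have hne : {μ : Ordinal.{v} | ¬ OrdEmb μ R}.Nonempty := by
      refine ⟨(Order.succ #X).ord, ?_⟩
      rintro ⟨g, -, hg⟩
      have hinj : Function.Injective fun x : (Order.succ #X).ord.ToType => g x.toOrd.1 :=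
        StrictMono.injective fun x y hxy => hg _ _
          (show x.toOrd < y.toOrd from Ordinal.ToType.mk.symm.strictMono hxy) y.toOrd.2
      have := mk_le_of_injective hinj
      rw [mk_toType, card_ord] at this
      exact absurd this (not_le.2 (Order.lt_succ _))
    by_contra! hle
    obtain ⟨g, hg, hg'⟩ := h
    exact csInf_mem hne ⟨g, fun ξ hξ => hg ξ (hξ.trans_le hle),
      fun ξ η hξη hη => hg' ξ η hξη (hη.trans_le hle)⟩

theorem ordBound_mono {R R' : Set X} (h : R ⊆ R') : ordBound R ≤ ordBound R' :=
  le_of_forall_lt fun _ hμ => lt_ordBound_iff.2 ((lt_ordBound_iff.1 hμ).mono h)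

theorem upBase_of_ordEmb {R T : Set X} {ρ : X → X} {a : Ordinal.{v}} (hρ : Monotone ρ)
    (hTR : T ⊆ R) (hT : ∀ x ∈ T, ∀ y ∈ T, ∀ z ∈ R, x < z → z < y → z ∈ T)
    (hR : ∀ x ∈ R, ∀ y ∈ R, x < y → ∃ z ∈ R, x < z ∧ z < y)
    (ha : ∀ d ∈ T, ∀ e ∈ T, d < e → ∀ μ < a, OrdEmb μ (R ∩ Ioo d e)) :
    UpBase {I | ∃ d ∈ T, ∃ e ∈ T, d < e ∧ I = ρ ⁻¹' Ioo d e} a := by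
  classical
  rintro _ ⟨d, hd, e, he, hde, rfl⟩ μ hμ
  obtain ⟨m, hmR, hdm, hme⟩ := hR d (hTR hd) e (hTR he) hde
  have hmT := hT d hd e he m hmR hdm hme
  obtain ⟨g, hg, hg'⟩ := ha d hd m hmT hdm μ hμ
  have hgT : ∀ ξ < μ, g ξ ∈ T := fun ξ hξ =>
    hT d hd m hmT _ (hg ξ hξ).1 (hg ξ hξ).2.1 (hg ξ hξ).2.2
  let u : Ordinal.{v} → X := fun ξ => if Order.succ ξ < μ then g (Order.succ ξ) else m
  have hu : ∀ ξ < μ, u ξ ∈ T ∧ g ξ < u ξ ∧ u ξ ≤ m := by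
    intro ξ hξ
    by_cases h : Order.succ ξ < μ
    · simp only [u, if_pos h]
      exact ⟨hgT _ h, hg' _ _ (Order.lt_succ ξ) h, (hg _ h).2.2.le⟩
    · simp only [u, if_neg h]
      exact ⟨hmT, (hg ξ hξ).2.2, le_rfl⟩
  refine ⟨fun ξ => ρ ⁻¹' Ioo (g ξ) (u ξ), fun ξ hξ => ⟨⟨_, hgT ξ hξ, _, (hu ξ hξ).1,
    (hu ξ hξ).2.1, rfl⟩, ?_, fun η hη x hx y hy => ?_⟩⟩
  · exact preimage_mono (Ioo_subset_Ioo (hg ξ hξ).2.1.le ((hu ξ hξ).2.2.trans hme.le))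
  · have hηξ : Order.succ η ≤ ξ := Order.succ_le_of_lt hη
    have hlt : Order.succ η < μ := hηξ.trans_lt hξ
    have h1 : ρ x < g (Order.succ η) := by
      have := hx.2
      simpa only [u, if_pos hlt] using this
    have h2 : g (Order.succ η) ≤ g ξ := by
      rcases hηξ.lt_or_eq with h | h
      · exact (hg' _ _ h hξ).le
      · rw [h]
    exact hρ.reflect_lt (h1.trans_le (h2.trans hy.1.le))

end Tail

section Structure

variable {X : Type v} [LinearOrder X]

theorem HInd.icc_of_split {x y : X} (d : X) (h : HInd (Icc x y ∩ Iio d))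
    (h' : HInd (Icc x y ∩ Ici d)) : HInd (Icc x y) := by
  refine (HInd.union (fun a ha b hb => ha.2.trans_le hb.2) h h').mono fun z hz => ?_
  exact (lt_or_ge z d).imp (⟨hz, ·⟩) (⟨hz, ·⟩)

/-- If a countable union of scattered orders is not constructible from singletons, then it maps
monotonically onto a dense subset of itself, with constructible fibres. -/
theorem exists_dense_of_not_hInd (h : ¬ HInd (univ : Set X)) :
    ∃ (R : Set X) (ρ : X → X), R.Nontrivial ∧
      (∀ x ∈ R, ∀ y ∈ R, x < y → ∃ z ∈ R, x < z ∧ z < y) ∧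
      (∀ x ∈ R, ∀ y ∈ R, x < y → ¬ HInd (Icc x y)) ∧ Monotone ρ ∧ (∀ x, ρ x ∈ R) ∧
      (∀ x ∈ R, ρ x = x) ∧ ∀ d, HInd (fib univ ρ d) := by
  obtain ⟨R, -, hR, hd, hne, hrep⟩ := exists_dense_of_not (P := HInd) (S := (univ : Set X))
    (fun _ _ h h' => h'.mono h) (fun C hC => by
      rw [disjoint_univ] at hC
      rw [hC]
      exact fun D hD hne => absurd (hne.mono hD) not_nonempty_empty)
    (fun x => .of_subset_singleton subset_rfl) (fun _ _ => HInd.union)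
    (fun _ => .of_forall_Iic) (fun _ => .of_forall_Ici) h
  choose ρ hρ hPρ using fun x => hrep x (mem_univ x)
  refine ⟨R, ρ, hR, hd, hne, fun x y hxy => ?_, hρ, fun x hx => ?_, fun d => ?_⟩
  · by_contra! hlt
    refine hne _ (hρ y) _ (hρ x) hlt (HInd.icc_of_split x ((hPρ y).mono ?_) ((hPρ x).mono ?_))
    · exact fun z hz => mem_uIcc.2 (Or.inr ⟨hz.1.1, (le_of_lt hz.2).trans hxy⟩)
    · exact fun z hz => mem_uIcc.2 (Or.inl ⟨hz.2, hz.1.2⟩)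
  · have := hPρ x
    rcases lt_trichotomy x (ρ x) with h | h | h
    · exact absurd (by rwa [uIcc_of_le h.le] at this) (hne _ hx _ (hρ x) h)
    · exact h.symm
    · exact absurd (by rwa [uIcc_of_ge h.le] at this) (hne _ (hρ x) _ hx h)
  · refine .of_forall_Iic fun y hy => .of_forall_Ici fun x hx => ?_
    obtain ⟨-, rfl⟩ := hy
    have hx' := hPρ x
    rw [hx.1.2] at hx'
    refine (HInd.icc_of_split (x := x) (y := y) (ρ y) (hx'.mono fun z hz => ?_)
      ((hPρ y).mono fun z hz => ?_)).mono fun z hz => ⟨hz.2, hz.1.2⟩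
    · exact mem_uIcc.2 (Or.inl ⟨hz.1.1, le_of_lt hz.2⟩)
    · exact mem_uIcc.2 (Or.inr ⟨hz.2, hz.1.2⟩)

theorem OrdConnected.mem_of_fib {C : Set X} {ρ : X → X} (hρ : Monotone ρ)
    (hC : C.OrdConnected) {d e x : X} (hd : d ∈ ρ '' C) (he : e ∈ ρ '' C) (hx : ρ x ∈ Ioo d e) :
    x ∈ C := by
  obtain ⟨s, hs, rfl⟩ := hd
  obtain ⟨t, ht, rfl⟩ := he
  exact hC.out hs ht ⟨(hρ.reflect_lt hx.1).le, (hρ.reflect_lt hx.2).le⟩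

/-- A convex subset of a sum over a dense order is a shuffle, provided that embeddability between
the parts of the sum is homogeneous. -/
theorem isShuf_of_homogeneous {R C : Set X} {ρ : X → X} {a b : Ordinal.{v}} {d₀ e₀ : X}
    (hcov : ∃ S : ℕ → Set X, Set.univ ⊆ ⋃ n, S n ∧ ∀ n, QFree (S n))
    (hR : ∀ x ∈ R, ∀ y ∈ R, x < y → ∃ z ∈ R, x < z ∧ z < y) (hρ : Monotone ρ)
    (hρR : ∀ x, ρ x ∈ R) (hρ' : ∀ x ∈ R, ρ x = x)
    (hC : C.OrdConnected) (hC₀ : C ⊆ ρ ⁻¹' Ioo d₀ e₀) (hnt : (ρ '' C).Nontrivial)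
    (ha : ∀ d ∈ R, ∀ e ∈ R, d₀ ≤ d → d < e → e ≤ e₀ → ordBound (R ∩ Ioo d e) = a)
    (hb : ∀ d ∈ R, ∀ e ∈ R, d₀ ≤ d → d < e → e ≤ e₀ → ordBound (dualSet (R ∩ Ioo d e)) = b)
    (hemb : ∀ x ∈ R ∩ Ioo d₀ e₀, ∀ d ∈ R, ∀ e ∈ R, d₀ ≤ d → d < e → e ≤ e₀ →
      Emb (fib univ ρ x) (ρ ⁻¹' Ioo d e)) (hd₀ : d₀ ∈ R) (he₀ : e₀ ∈ R) : IsShuf C ρ a b := by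
  have hTR : ρ '' C ⊆ R ∩ Ioo d₀ e₀ := by
    rintro _ ⟨x, hx, rfl⟩
    exact ⟨hρR x, hC₀ hx⟩
  have hT : ∀ x ∈ ρ '' C, ∀ y ∈ ρ '' C, ∀ z ∈ R, x < z → z < y → z ∈ ρ '' C :=
    fun x hx y hy z hz hxz hzy => ⟨z, OrdConnected.mem_of_fib hρ hC hx hy
      (by rw [hρ' z hz]; exact ⟨hxz, hzy⟩), hρ' z hz⟩
  have h₀ : d₀ < e₀ := by
    obtain ⟨x, hx, -⟩ := hnt
    exact (hTR hx).2.1.trans (hTR hx).2.2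
  obtain ⟨S, hS, hS'⟩ := hcov
  refine ⟨hρ.monotoneOn C, ⟨S, (subset_univ _).trans hS, hS'⟩, fun μ hμ => ?_, fun μ hμ => ?_,
    {I | ∃ d ∈ ρ '' C, ∃ e ∈ ρ '' C, d < e ∧ I = ρ ⁻¹' Ioo d e}, ?_, ?_, ?_, ?_⟩
  · rw [← ha d₀ hd₀ e₀ he₀ le_rfl h₀ le_rfl, lt_ordBound_iff]
    exact hμ.mono hTR
  · rw [← hb d₀ hd₀ e₀ he₀ le_rfl h₀ le_rfl, lt_ordBound_iff]
    exact hμ.mono fun x hx => hTR hx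
  · obtain ⟨x, hx, y, hy, hxy⟩ := hnt.exists_lt
    exact ⟨_, x, hx, y, hy, hxy, rfl⟩
  · refine upBase_of_ordEmb hρ (hTR.trans inter_subset_left) hT hR fun d hd e he hde μ hμ => ?_
    rwa [← lt_ordBound_iff, ha d (hTR hd).1 e (hTR he).1 (hTR hd).2.1.le hde (hTR he).2.2.le]
  · have := upBase_of_ordEmb (X := Xᵒᵈ) (R := dualSet R) (T := dualSet (ρ '' C))
      (ρ := OrderDual.toDual ∘ ρ ∘ OrderDual.ofDual) (a := b) (fun x y h => hρ h)
      (fun x hx => (hTR hx).1) (fun x hx y hy z hz hxz hzy => hT y hy x hx z hz hzy hxz)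
      (fun x hx y hy hxy => by
        obtain ⟨z, hz, h1, h2⟩ := hR y hy x hx hxy
        exact ⟨z, hz, h2, h1⟩) fun d hd e he hde μ hμ => by
          rw [← hb e (hTR he).1 d (hTR hd).1 (hTR he).2.1.le hde (hTR hd).2.2.le,
            lt_ordBound_iff] at hμ
          exact hμ.mono fun x hx => ⟨hx.1, hx.2.2, hx.2.1⟩
    have hset : dualFamily {I | ∃ d ∈ ρ '' C, ∃ e ∈ ρ '' C, d < e ∧ I = ρ ⁻¹' Ioo d e} =
        {I | ∃ d ∈ dualSet (ρ '' C), ∃ e ∈ dualSet (ρ '' C), d < e ∧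
          I = (OrderDual.toDual ∘ ρ ∘ OrderDual.ofDual) ⁻¹' Ioo d e} := by
      ext I
      constructor
      · rintro ⟨d, hd, e, he, hde, hI⟩
        refine ⟨OrderDual.toDual e, he, OrderDual.toDual d, hd, hde, ?_⟩
        ext x
        exact (Set.ext_iff.1 hI x).trans and_comm
      · rintro ⟨e, he, d, hd, hde, hI⟩
        refine ⟨OrderDual.ofDual d, hd, OrderDual.ofDual e, he, hde, ?_⟩
        ext x
        exact (Set.ext_iff.1 hI x).trans and_comm
    rwa [hset]
  · rintro _ ⟨d, hd, e, he, hde, rfl⟩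
    refine ⟨fun x hx => OrdConnected.mem_of_fib hρ hC hd he hx, fun x hx => ?_⟩
    refine Emb.trans (Emb.of_subset (C' := fib Set.univ ρ x) fun y hy => ⟨mem_univ y, hy.2⟩) (hemb x (hTR hx) d (hTR hd).1 e
      (hTR he).1 (hTR hd).2.1.le hde (hTR he).2.2.le)

/-- Nonempty countable unions of scattered orders are constructible from singletons. -/
theorem hInd_univ (hcov : ∃ S : ℕ → Set X, Set.univ ⊆ ⋃ n, S n ∧ ∀ n, QFree (S n)) :
    HInd (univ : Set X) := by
  by_contra hnot
  obtain ⟨R, ρ, hR, hd, hne, hρ, hρR, hρ', hfib⟩ := exists_dense_of_not_hInd hnot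
  let W : Set (X × X) := {p | p.1 ∈ R ∧ p.2 ∈ R ∧ p.1 < p.2}
  let sub : X × X → Set (X × X) := fun p => {q | q ∈ W ∧ p.1 ≤ q.1 ∧ q.2 ≤ p.2}
  have hsub : ∀ p q, q ∈ sub p → sub q ⊆ sub p := fun p q hq q' hq' =>
    ⟨hq'.1, hq.2.1.trans hq'.2.1, hq'.2.2.trans hq.2.2⟩
  have hself : ∀ p ∈ W, p ∈ sub p := fun p hp => ⟨hp, le_rfl, le_rfl⟩
  let A : X × X → Ordinal.{v} := fun p => ordBound (R ∩ Ioo p.1 p.2)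
  let B : X × X → Ordinal.{v} := fun p => ordBound (dualSet (R ∩ Ioo p.1 p.2))
  have hss : ∀ p, ∀ q ∈ sub p, R ∩ Ioo q.1 q.2 ⊆ R ∩ Ioo p.1 p.2 := fun p q hq =>
    inter_subset_inter_right _ (Ioo_subset_Ioo hq.2.1 hq.2.2)
  have hA : ∀ p, ∀ q ∈ sub p, A q ≤ A p := fun p q hq => ordBound_mono (hss p q hq)
  have hB : ∀ p, ∀ q ∈ sub p, B q ≤ B p := fun p q hq =>
    ordBound_mono (preimage_mono (hss p q hq))
  obtain ⟨x₀, hx₀, y₀, hy₀, hxy₀⟩ := hR.exists_lt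
  obtain ⟨p₁, hp₁, hmin₁⟩ := exists_minimalFor_of_wellFoundedLT (· ∈ W) A ⟨(x₀, y₀), hx₀, hy₀, hxy₀⟩
  obtain ⟨p₂, hp₂, hmin₂⟩ := exists_minimalFor_of_wellFoundedLT (· ∈ sub p₁) B ⟨p₁, hself _ hp₁⟩
  have hA₂ : ∀ q ∈ sub p₂, A q = A p₁ := fun q hq =>
    le_antisymm (hA _ _ (hsub _ _ hp₂ hq)) (hmin₁ hq.1 (hA _ _ (hsub _ _ hp₂ hq)))
  have hB₂ : ∀ q ∈ sub p₂, B q = B p₂ := fun q hq =>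
    le_antisymm (hB _ _ hq) (hmin₂ (hsub _ _ hp₂ hq) (hB _ _ hq))
  obtain ⟨p, hp, hemb⟩ : ∃ p ∈ sub p₂, ∀ x ∈ R ∩ Ioo p.1 p.2, ∀ q ∈ sub p,
      Emb (fib univ ρ x) (ρ ⁻¹' Ioo q.1 q.2) := by
    by_contra! hno
    have : ∀ p : sub p₂, ∃ (x : X) (q : sub p₂), x ∈ R ∩ Ioo p.1.1 p.1.2 ∧ q.1 ∈ sub p.1 ∧
        ¬ Emb (fib univ ρ x) (ρ ⁻¹' Ioo q.1.1 q.1.2) := by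
      intro p
      obtain ⟨x, hx, q, hq, h⟩ := hno p p.2
      exact ⟨x, ⟨q, hsub _ _ p.2 hq⟩, hx, hq, h⟩
    choose x q hx hq hxq using this
    let P : ℕ → sub p₂ := fun n => Nat.rec ⟨p₂, hself _ hp₂.1⟩ (fun _ p => q p) n
    have hP : ∀ i k, (P (i + k)).1 ∈ sub (P i).1 := by
      intro i k
      induction k with
      | zero => exact hself _ (P i).2.1
      | succ k ih => exact hsub _ _ ih (hq (P (i + k)))
    obtain ⟨i, j, hij, h⟩ := Ind.exists_emb (fun n => fib univ ρ (x (P n))) fun n =>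
      hfib _ _ subset_rfl ⟨x (P n), mem_univ _, hρ' _ (hx _).1⟩
        (ordConnected_fib ordConnected_univ (hρ.monotoneOn _) _)
    refine hxq (P i) (h.trans (Emb.of_subset ?_))
    rintro y ⟨-, hy⟩
    obtain ⟨k, rfl⟩ := Nat.exists_eq_add_of_le (Nat.succ_le_of_lt hij)
    have h1 := hP (i + 1) k
    have h2 := hx (P (i + 1 + k))
    rw [mem_preimage, hy]
    exact ⟨h1.2.1.trans_lt h2.2.1, h2.2.2.trans_le h1.2.2⟩
  obtain ⟨hp1, hp2, hlt⟩ := hp.1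
  have hmid : HInd (ρ ⁻¹' Ioo p.1 p.2) := by
    intro C hC hCne hconn
    rcases (ρ '' C).subsingleton_or_nontrivial with hs | hnt
    · obtain ⟨x, hx⟩ := hCne
      exact hfib (ρ x) C (fun y hy => ⟨mem_univ y, hs (mem_image_of_mem ρ hy)
        (mem_image_of_mem ρ hx)⟩) ⟨x, hx⟩ hconn
    · have hshuf := isShuf_of_homogeneous (a := A p₁) (b := B p₂) hcov hd hρ hρR hρ' hconn hC hnt
        (fun d hd e he h1 h2 h3 => hA₂ (d, e) (hsub _ _ hp ⟨⟨hd, he, h2⟩, h1, h3⟩))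
        (fun d hd e he h1 h2 h3 => hB₂ (d, e) (hsub _ _ hp ⟨⟨hd, he, h2⟩, h1, h3⟩))
        (fun x hx d hd e he h1 h2 h3 => hemb x hx (d, e) ⟨⟨hd, he, h2⟩, h1, h3⟩) hp1 hp2
      refine (Step.shuf C ρ _ _ hCne hshuf).ind fun _ => ?_
      rintro _ ⟨d, hd, rfl⟩
      exact hfib d _ (fun x hx => ⟨mem_univ x, hx.2⟩) (fib_nonempty hd)
        (ordConnected_fib hconn (hρ.monotoneOn C) d)
  refine hne _ hp1 _ hp2 hlt (((HInd.union ?_ (HInd.union ?_ (hfib p.1) hmid) (hfib p.2)).mono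
    fun x hx => ?_))
  · rintro x (⟨-, hx⟩ | hx) y ⟨-, hy⟩
    · exact hρ.reflect_lt (by rw [hx, hy]; exact hlt)
    · exact hρ.reflect_lt (by rw [hy]; exact hx.2)
  · rintro x ⟨-, hx⟩ y hy
    exact hρ.reflect_lt (by rw [hx]; exact hy.1)
  · have h1 := hρ hx.1
    have h2 := hρ hx.2
    rw [hρ' _ hp1] at h1
    rw [hρ' _ hp2] at h2
    rcases h1.eq_or_lt with h1 | h1
    · exact Or.inl (Or.inl ⟨mem_univ x, h1.symm⟩)
    · rcases h2.eq_or_lt with h2 | h2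
      · exact Or.inr ⟨mem_univ x, h2⟩
      · exact Or.inl (Or.inr ⟨h1, h2⟩)

end Structure

section Union

theorem unionRel_mk_iff {I : Type*} {X : I → Type*} {R : ∀ i, X i → X i → Prop} {i : I}
    {x y : X i} : unionRel R ⟨i, x⟩ ⟨i, y⟩ ↔ R i x y :=
  ⟨fun ⟨_, h⟩ => h, fun h => ⟨rfl, h⟩⟩

theorem embedsIn_of_emb {X Y : Type*} [LinearOrder X] [LinearOrder Y]
    (h : Emb (Set.univ : Set X) (Set.univ : Set Y)) :
    EmbedsIn ((· < ·) : X → X → Prop) ((· < ·) : Y → Y → Prop) := by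
  obtain ⟨f, -, hf⟩ := h
  have hf' : StrictMono f := strictMonoOn_univ.1 hf
  exact ⟨f, hf'.injective, fun x y => hf'.lt_iff_lt.symm⟩

theorem SigmaScattered.exists_qFree {X : Type*} [LinearOrder X]
    (h : SigmaScattered X (· < ·)) :
    ∃ S : ℕ → Set X, Set.univ ⊆ ⋃ n, S n ∧ ∀ n, QFree (S n) := by
  obtain ⟨S, hS, hS'⟩ := h
  refine ⟨S, hS.ge, fun n ⟨f, hf, hmono⟩ => hS' n ⟨fun q => ⟨f q, hf q⟩, fun p q hpq => ?_,
    fun p q => hmono.lt_iff_lt.symm⟩⟩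
  exact hmono.injective (congrArg Subtype.val hpq)

/-- Nonempty σ-scattered linear orders are well-quasi-ordered by embeddability. -/
theorem wellQuasiOrdered_emb {N : Type u} {X : N → Type v} [∀ i, LinearOrder (X i)]
    [∀ i, Nonempty (X i)] (h : ∀ i, SigmaScattered (X i) (· < ·)) :
    WellQuasiOrdered fun i j : N => Emb (Set.univ : Set (X i)) (Set.univ : Set (X j)) :=
  fun u => Ind.exists_emb (fun n => (Set.univ : Set (X (u n)))) fun n =>
    hInd_univ (h (u n)).exists_qFree _ subset_rfl univ_nonempty ordConnected_univ

/-- A condensation of a disjoint union of linear orders maps every summand into a single one. -/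
theorem IsCond.exists_component {I : Type u} {X : I → Type v} [∀ i, LinearOrder (X i)]
    {f : (Σ i, X i) → Σ i, X i}
    (hf : IsCond (unionRel fun i => ((· < ·) : X i → X i → Prop)) (unionRel fun _ => (· < ·)) f)
    {i : I} (hi : Nonempty (X i)) :
    ∃ (j : I) (φ : X i → X j), StrictMono φ ∧ ∀ x, f ⟨i, x⟩ = ⟨j, φ x⟩ := by
  obtain ⟨x₀⟩ := hi
  have hfst : ∀ x, (f ⟨i, x⟩).1 = (f ⟨i, x₀⟩).1 := by
    intro x
    rcases lt_trichotomy x x₀ with h | rfl | h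
    · exact (hf.2 _ _ (unionRel_mk_iff.2 h)).1
    · rfl
    · exact (hf.2 _ _ (unionRel_mk_iff.2 h)).1.symm
  have : ∀ x, ∃ y : X (f ⟨i, x₀⟩).1, f ⟨i, x⟩ = ⟨(f ⟨i, x₀⟩).1, y⟩ := fun x =>
    ⟨hfst x ▸ (f ⟨i, x⟩).2, by ext <;> simp [hfst x]⟩
  choose φ hφ using this
  refine ⟨_, φ, fun x y hxy => ?_, hφ⟩
  have := hf.2 _ _ (unionRel_mk_iff.2 hxy)
  rw [hφ x, hφ y] at this
  exact unionRel_mk_iff.1 this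

/-- A surjection that only decreases with respect to a well-quasi-order, all of whose equivalence
classes are finite, is injective. -/
theorem WellQuasiOrdered.injective_of_surjective {N : Type*} {r : N → N → Prop} [IsPreorder N r]
    (hr : WellQuasiOrdered r) (hfin : ¬ ∃ J : Set N, J.Infinite ∧ ∀ i ∈ J, ∀ j ∈ J, r i j)
    {g : N → N} (hg : Function.Surjective g) (hle : ∀ i, r i (g i)) : Function.Injective g := by
  obtain ⟨σ, hσ⟩ := hg.hasRightInverse
  have hper : ∀ i, i ∈ Function.periodicPts g := by
    intro i
    by_contra hi
    let c : ℕ → N := fun n => σ^[n] i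
    have hc : Function.Injective c := by
      have key : ∀ m n, m < n → c m ≠ c n := by
        intro m n hmn heq
        refine hi ?_
        obtain ⟨k, rfl⟩ := Nat.exists_eq_add_of_lt hmn
        have h1 := congrArg g^[m] heq
        simp only [c, add_assoc, Function.iterate_add_apply σ m] at h1
        rw [hσ.iterate m, hσ.iterate m] at h1
        have h2 := congrArg g^[k + 1] h1
        rw [hσ.iterate (k + 1)] at h2
        exact ⟨k + 1, Nat.succ_pos k, h2⟩
      intro m n heq
      by_contra hne
      exact (Nat.lt_or_gt_of_ne hne).elim (fun h => key m n h heq) fun h => key n m h heq.symm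
    have hanti : ∀ m k, r (c (m + k)) (c m) := by
      intro m k
      induction k with
      | zero => exact refl _
      | succ k ih =>
        refine _root_.trans ?_ ih
        have := hle (σ (c (m + k)))
        rw [hσ] at this
        rwa [show c (m + (k + 1)) = σ (c (m + k)) from Function.iterate_succ_apply' σ _ _]
    obtain ⟨φ, hφ⟩ := hr.exists_monotone_subseq c
    refine hfin ⟨range (c ∘ φ), infinite_range_of_injective (hc.comp φ.injective), ?_⟩
    rintro _ ⟨m, rfl⟩ _ ⟨n, rfl⟩
    rcases le_total m n with h | h
    · exact hφ m n h
    · obtain ⟨k, hk⟩ := Nat.exists_eq_add_of_le (φ.monotone h)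
      simp only [Function.comp_apply, hk]
      exact hanti _ _
  have := (Function.bijOn_periodicPts g).injOn
  rwa [eq_univ_of_forall hper, injOn_univ] at this

end Union

end WellQuasiOrder

/-- **Proposition (Statement 16).** Let `X i`, `i ∈ I`, be pairwise disjoint (realized by a
sigma type) σ-scattered linear orders. If the sequence `⟨[X i]_⇄ : i ∈ I⟩` of
bi-embeddability classes is finite-to-one (there is no infinite `J ⊆ I` such that
`X i ⇄ X j` for all `i, j ∈ J`), then the disjoint union `⋃_{i∈I} X i` is a reversible
poset. -/
theorem stmt16 {I : Type u} {X : I → Type v} [∀ i, LinearOrder (X i)]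
    (hss : ∀ i, SigmaScattered (X i) (· < ·))
    (hfto : ¬ ∃ J : Set I, J.Infinite ∧ ∀ i ∈ J, ∀ j ∈ J,
      EmbedsIn ((· < ·) : X i → X i → Prop) ((· < ·) : X j → X j → Prop) ∧
      EmbedsIn ((· < ·) : X j → X j → Prop) ((· < ·) : X i → X i → Prop)) :
    Reversible (unionRel (fun i => ((· < ·) : X i → X i → Prop))) := by
  intro f hf
  refine ⟨hf.1, fun a b => ⟨hf.2 a b, fun hab => ?_⟩⟩
  let N := {i // Nonempty (X i)}
  have hcomp : ∀ i : N, ∃ (j : N) (φ : X i → X j), StrictMono φ ∧ ∀ x, f ⟨i, x⟩ = ⟨j, φ x⟩ := by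
    intro i
    obtain ⟨j, φ, hφ⟩ := hf.exists_component i.2
    exact ⟨⟨j, i.2.map φ⟩, φ, hφ⟩
  choose g φ hφ hfφ using hcomp
  have : ∀ i : N, Nonempty (X i) := fun i => i.2
  let r : N → N → Prop := fun i j => Emb (Set.univ : Set (X i)) (Set.univ : Set (X j))
  have : IsPreorder N r := { refl := fun i => Emb.refl _, trans := fun i j k => Emb.trans }
  have hwqo : WellQuasiOrdered r := wellQuasiOrdered_emb fun i : N => hss i
  have hinj : Function.Injective g := by
    refine hwqo.injective_of_surjective ?_ (fun j => ?_)
      fun i => ⟨φ i, Set.mapsTo_univ _ _, (hφ i).strictMonoOn _⟩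
    · rintro ⟨J, hJ, h⟩
      refine hfto ⟨Subtype.val '' J, hJ.image Subtype.val_injective.injOn, ?_⟩
      rintro _ ⟨i, hi, rfl⟩ _ ⟨j, hj, rfl⟩
      exact ⟨embedsIn_of_emb (h i hi j hj), embedsIn_of_emb (h j hj i hi)⟩
    · obtain ⟨y⟩ := j.2
      obtain ⟨⟨i, x⟩, hx⟩ := hf.1.2 ⟨j, y⟩
      refine ⟨⟨i, ⟨x⟩⟩, Subtype.ext ?_⟩
      rw [hfφ ⟨i, ⟨x⟩⟩ x] at hx
      exact congrArg Sigma.fst hx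
  obtain ⟨i, x⟩ := a
  obtain ⟨j, y⟩ := b
  have hx := hfφ ⟨i, ⟨x⟩⟩ x
  have hy := hfφ ⟨j, ⟨y⟩⟩ y
  obtain rfl : i = j := by
    refine congrArg Subtype.val (@hinj ⟨i, ⟨x⟩⟩ ⟨j, ⟨y⟩⟩ (Subtype.ext ?_))
    rw [hx, hy] at hab
    exact hab.1
  rw [hx, hy, unionRel_mk_iff] at hab
  exact unionRel_mk_iff.2 ((hφ _).lt_iff_lt.1 hab)
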